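/- For n ≥ 2, the bigraded Hilbert series H(s,t) := Σ_{d,e ≥ 0} dim_{F_q}( (F_q[V ⊕ V*]^{U_n})_{(d,e)} ) s^d t^e of the invariant ring of U_n, as a formal power series in ℤ[[s,t]], satisfies H(s,t) · ∏_{i=0}^{n−1} (1−s^{q^i})(1−t^{q^i}) · ∏_{i=0}^{n−2} (1−s^{q^i} t) · ∏_{i=1}^{n−2} (1−s t^{q^i}) = ∏_{k=2}^{n−1} (1 − s^{q^{k−1}} t^{q^{n−k}}) · ∏_{k=1}^{n−1} (1 − s^{q^k} t^{q^{n−k}}). -/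

import Mathlib

open MvPolynomial Matrix

variable (F : Type) [Field F] [Fintype F] (n : ℕ)

/-- The action of `σ ∈ GL_n(F)` on `F[V ⊕ V*] = F[x_1,…,x_n,y_1,…,y_n]`. -/
noncomputable def gact (σ : GL (Fin n) F) :
    MvPolynomial (Fin n ⊕ Fin n) F →ₐ[F] MvPolynomial (Fin n ⊕ Fin n) F :=
  aeval (Sum.elim
    (fun j => ∑ i : Fin n, C ((σ : Matrix (Fin n) (Fin n) F) i j) * X (Sum.inl i))
    (fun j => ∑ i : Fin n,
      C (((σ⁻¹ : GL (Fin n) F) : Matrix (Fin n) (Fin n) F) j i) * X (Sum.inr i)))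

/-- The bihomogeneous component of bidegree `(d,e)` of the invariant ring
`F[V ⊕ V*]^{U_n}`: polynomials fixed by all upper unipotent matrices that are
homogeneous of degree `d` in the `x`-variables and of degree `e` in the `y`-variables. -/
noncomputable def invBihom (d e : ℕ) : Submodule F (MvPolynomial (Fin n ⊕ Fin n) F) :=
  weightedHomogeneousSubmodule F (Sum.elim (fun _ : Fin n => 1) (fun _ : Fin n => 0)) d ⊓
  weightedHomogeneousSubmodule F (Sum.elim (fun _ : Fin n => 0) (fun _ : Fin n => 1)) e ⊓
  ⨅ (σ : GL (Fin n) F) (_ : (∀ i : Fin n, (σ : Matrix (Fin n) (Fin n) F) i i = 1) ∧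
      ∀ i j : Fin n, j < i → (σ : Matrix (Fin n) (Fin n) F) i j = 0),
    LinearMap.ker ((gact F n σ).toLinearMap -
      (LinearMap.id : MvPolynomial (Fin n ⊕ Fin n) F →ₗ[F] MvPolynomial (Fin n ⊕ Fin n) F))

/-- The bigraded Hilbert series `H(s,t) = ∑ dim (F[V ⊕ V*]^{U_n})_{(d,e)} s^d t^e`
as a formal power series in two variables `s = X 0`, `t = X 1`. -/
noncomputable def hilbertSeries : MvPowerSeries (Fin 2) ℤ :=
  fun m => (Module.finrank F (invBihom F n (m 0) (m 1)) : ℤ)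

/-!
Let `q = |F|`, let `A` be the algebra generated by the orbit products of the `x_i` and of the `y_i`
under `U_n`, which is a polynomial ring in `2 * n` variables, and for `|j| ≤ n - 2` let
`u_j = ∑ i, x_i ^ q ^ a * y_i ^ q ^ b`, with `a - b = j` and `min a b = 0`, be the Frobenius twists
of the invariant pairing. Evaluating the additive polynomials of the two flags inside the pairing
gives relations whose leading terms are powers `u_j ^ N_j`. So the monomials `∏ u_j ^ c_j` with
`c_j < N_j` span `A[u]` over `A`. There are `∏ N_j = |U_n|` of them, as many as there are
substitutions by `U_n` in the `y_i` alone; these fix `A` and are distinguished by `u_0`, so by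
Dedekind's theorem the monomials are linearly independent over `A`. The same argument shows that
every invariant lies in `A[u]` up to a denominator that is a product of orbit products of the `x_i`,
and also up to one made of those of the `y_i`. The two denominators are coprime in `A` and `A[u]` is
free over `A`, so `A[u]` is the whole invariant ring, and its Hilbert series is read off the basis.
-/

section FrobPairing

variable {S : Type*} [CommSemiring S] {n}

/-- The Frobenius twist `∑ m, x m ^ q ^ a * y m ^ q ^ b` of the pairing of `x` and `y`, where `q` is
the cardinality of `K`. -/
def frobPairing (K : Type*) [Fintype K] (x y : Fin n → S) (a b : ℕ) : S :=
  (x ^ Fintype.card K ^ a) ⬝ᵥ (y ^ Fintype.card K ^ b)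

variable {K : Type*} [Fintype K]

theorem frobPairing_comp_rev (x y : Fin n → S) (a b : ℕ) :
    frobPairing K (x ∘ Fin.rev) (y ∘ Fin.rev) a b = frobPairing K x y a b :=
  comp_equiv_dotProduct_comp_equiv (x ^ Fintype.card K ^ a) (y ^ Fintype.card K ^ b) Fin.revPerm

theorem frobPairing_swap (x y : Fin n → S) (a b : ℕ) :
    frobPairing K y x a b = frobPairing K x y b a :=
  dotProduct_comm _ _

end FrobPairing

section OrbitProducts

variable {K S : Type*} [Field K] [Fintype K] [CommRing S] [Algebra K S] {n}

local notation "q" => Fintype.card K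

theorem frobeniusAlgHom_pow_apply (c : ℕ) (s : S) :
    (FiniteField.frobeniusAlgHom K S ^ c) s = s ^ q ^ c := by
  rw [AlgHom.coe_pow, FiniteField.coe_frobeniusAlgHom, pow_iterate]

theorem sum_pow_card_pow {ι : Type*} (t : Finset ι) (f : ι → S) (c : ℕ) :
    (∑ i ∈ t, f i) ^ q ^ c = ∑ i ∈ t, f i ^ q ^ c := by
  simp only [← frobeniusAlgHom_pow_apply, map_sum]

variable (K) in
/-- The additive polynomial `T ↦ ∏ v, (T - v)`, with `v` running over the `K`-span of
`z 0, …, z (k - 1)`. It is built by adjoining one `z k` at a time: if `E` is the polynomial of a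
subspace `W`, then that of `W + K z` is `T ↦ ∏ c : K, E (T - c z) = E T ^ q - E z ^ (q - 1) * E T`.
-/
noncomputable def orbitMap (z : Fin n → S) : Fin (n + 1) → (S →ₗ[K] S) :=
  Fin.induction LinearMap.id fun k E ↦
    (FiniteField.frobeniusAlgHom K S).toLinearMap ∘ₗ E -
      LinearMap.mulLeft K (E (z k) ^ (q - 1)) ∘ₗ E

variable (K) in
/-- The product of the coset `z k + span (z 0, …, z (k - 1))`: the orbit product of `z k` under the
unitriangular group. -/
noncomputable def orbitProd (z : Fin n → S) (k : Fin n) : S :=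
  orbitMap K z k.castSucc (z k)

theorem orbitMap_zero (z : Fin n → S) (T : S) : orbitMap K z 0 T = T := rfl

theorem orbitMap_succ (z : Fin n → S) (k : Fin n) (T : S) :
    orbitMap K z k.succ T = orbitMap K z k.castSucc T ^ q -
      orbitProd K z k ^ (q - 1) * orbitMap K z k.castSucc T :=
  rfl

theorem orbitMap_apply_eq_zero (z : Fin n → S) (k : Fin (n + 1)) (i : Fin n)
    (hik : i.castSucc < k) : orbitMap K z k (z i) = 0 := by
  induction k using Fin.induction with
  | zero => exact absurd hik (Fin.not_lt_zero _)
  | succ k ih =>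
    rw [orbitMap_succ]
    rcases (Fin.castSucc_lt_succ_iff.1 hik).lt_or_eq with hlt | rfl
    · rw [ih (Fin.castSucc_lt_castSucc_iff.2 hlt), zero_pow Fintype.card_ne_zero, mul_zero,
        sub_zero]
    · rw [orbitProd, ← pow_succ, Nat.sub_add_cancel Fintype.card_pos, sub_self]

theorem orbitMap_eq_zero_of_mem_span (z : Fin n → S) (k : Fin n) {s : S}
    (hs : s ∈ Submodule.span K (z '' Set.Iio k)) : orbitMap K z k.castSucc s = 0 := by
  refine (Submodule.span_le (p := LinearMap.ker (orbitMap K z k.castSucc))).2 ?_ hs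
  rintro _ ⟨i, hi, rfl⟩
  exact orbitMap_apply_eq_zero z _ i (Fin.castSucc_lt_castSucc_iff.2 hi)

theorem exists_orbitMap_eq_sum {B : Subalgebra K S} {z : Fin n → S} (k : Fin (n + 1))
    (hB : ∀ j : Fin n, j.castSucc < k → orbitProd K z j ∈ B) :
    ∃ c : ℕ → B, c k = 1 ∧
      ∀ T, orbitMap K z k T = ∑ i ∈ Finset.range (k + 1), (c i : S) * T ^ q ^ i := by
  induction k using Fin.induction with
  | zero => exact ⟨1, rfl, fun T ↦ by simp [orbitMap_zero]⟩
  | succ k ih =>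
    obtain ⟨c, hck, hc⟩ := ih fun j hj ↦ hB j (hj.trans Fin.castSucc_lt_succ)
    let f : B := ⟨orbitProd K z k, hB k Fin.castSucc_lt_succ⟩
    let c' : ℕ → B := fun i ↦
      (if i = 0 then 0 else c (i - 1) ^ q) - if i ≤ k then f ^ (q - 1) * c i else 0
    have hck' : c' k.succ = 1 := by
      simpa [c'] using congrArg (· ^ q) hck
    refine ⟨c', hck', fun T ↦ ?_⟩
    have frob : orbitMap K z k.castSucc T ^ q =
        ∑ i ∈ Finset.range (k + 1), (c i : S) ^ q * T ^ q ^ (i + 1) := by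
      have := sum_pow_card_pow (K := K) (Finset.range (k + 1)) (fun i ↦ (c i : S) * T ^ q ^ i) 1
      simpa only [pow_one, hc, Fin.val_castSucc, mul_pow, ← pow_mul, ← pow_succ] using this
    have lower : ∑ i ∈ Finset.range (k + 2),
        ((if i ≤ k then f ^ (q - 1) * c i else 0 : B) : S) * T ^ q ^ i =
        orbitProd K z k ^ (q - 1) * orbitMap K z k.castSucc T := by
      rw [Finset.sum_range_succ, if_neg (by omega), ZeroMemClass.coe_zero, zero_mul, add_zero, hc,
        Finset.mul_sum]
      refine Finset.sum_congr rfl fun i hi ↦ ?_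
      rw [if_pos (show i ≤ (k : ℕ) from Finset.mem_range_succ_iff.1 hi)]
      simp [f, mul_assoc]
    simp only [orbitMap_succ, Fin.val_succ, c', AddSubgroupClass.coe_sub, sub_mul,
      Finset.sum_sub_distrib, lower, frob]
    rw [Finset.sum_range_succ' _ (k + 1)]
    simp

theorem map_orbitMap {φ : S →ₐ[K] S} {z : Fin n → S} (k : Fin (n + 1))
    (hφ : ∀ j : Fin n, j.castSucc < k → φ (orbitProd K z j) = orbitProd K z j) (T : S) :
    φ (orbitMap K z k T) = orbitMap K z k (φ T) := by
  induction k using Fin.induction with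
  | zero => rfl
  | succ k ih =>
    simp only [orbitMap_succ, map_sub, map_mul, map_pow, hφ k Fin.castSucc_lt_succ,
      ih fun j hj ↦ hφ j (hj.trans Fin.castSucc_lt_succ)]

theorem map_orbitProd {φ : S →ₐ[K] S} {z : Fin n → S}
    (hφ : ∀ j, φ (z j) - z j ∈ Submodule.span K (z '' Set.Iio j)) (k : Fin n) :
    φ (orbitProd K z k) = orbitProd K z k := by
  induction k using WellFoundedLT.induction with
  | ind k ih =>
    rw [orbitProd, map_orbitMap _ fun j hj ↦ ih j (Fin.castSucc_lt_castSucc_iff.1 hj),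
      ← sub_eq_zero, ← map_sub]
    exact orbitMap_eq_zero_of_mem_span z k (hφ k)

theorem frobPairing_pow (x y : Fin n → S) (a b c : ℕ) :
    frobPairing K x y a b ^ q ^ c = frobPairing K x y (a + c) (b + c) := by
  simp only [frobPairing, dotProduct, sum_pow_card_pow, Pi.pow_apply, mul_pow, ← pow_mul, ← pow_add]

/- The `m`-th summand vanishes unless `k ≤ m ≤ n - 1 - l`, which leaves at most `m = k = n - 1 - l`,
where it is a product of two orbit products. -/
theorem sum_orbitMap_mul_orbitMap_mem {B : Subalgebra K S} {x y : Fin n → S}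
    (hx : ∀ j, orbitProd K x j ∈ B) (hy : ∀ j, orbitProd K (y ∘ Fin.rev) j ∈ B)
    {k l : Fin (n + 1)} (hkl : n ≤ k + l + 1) :
    ∑ m, orbitMap K x k (x m) * orbitMap K (y ∘ Fin.rev) l (y m) ∈ B := by
  refine sum_mem fun m _ ↦ ?_
  have hym : y m = (y ∘ Fin.rev) m.rev := by simp
  rcases lt_or_ge m.castSucc k with hmk | hkm
  · rw [orbitMap_apply_eq_zero x k m hmk, zero_mul]
    exact zero_mem B
  rcases lt_or_ge m.rev.castSucc l with hml | hlm
  · rw [hym, orbitMap_apply_eq_zero _ l m.rev hml, mul_zero]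
    exact zero_mem B
  have hk : k = m.castSucc := by
    simp only [Fin.le_def, Fin.ext_iff, Fin.val_castSucc, Fin.val_rev] at *
    omega
  have hl : l = m.rev.castSucc := by
    simp only [Fin.le_def, Fin.ext_iff, Fin.val_castSucc, Fin.val_rev] at *
    omega
  rw [hym, hk, hl]
  exact mul_mem (hx m) (hy m.rev)

theorem frobPairing_mem_of_lt {B : Subalgebra K S} {M : Submodule B S} (hM : 1 ∈ M)
    {x y : Fin n → S} (hx : ∀ j, orbitProd K x j ∈ B) (hy : ∀ j, orbitProd K (y ∘ Fin.rev) j ∈ B)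
    {k l : Fin (n + 1)} (hkl : n ≤ k + l + 1)
    (hlt : ∀ p : ℕ × ℕ, p < (↑k, ↑l) → frobPairing K x y p.1 p.2 ∈ M) :
    frobPairing K x y k l ∈ M := by
  obtain ⟨c, hck, hc⟩ := exists_orbitMap_eq_sum k fun j _ ↦ hx j
  obtain ⟨d, hdl, hd⟩ := exists_orbitMap_eq_sum l fun j _ ↦ hy j
  have expand : ∑ m, orbitMap K x k (x m) * orbitMap K (y ∘ Fin.rev) l (y m) =
      ∑ p ∈ Finset.range (k + 1) ×ˢ Finset.range (l + 1),
        (c p.1 * d p.2) • frobPairing K x y p.1 p.2 := by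
    simp_rw [hc, hd, Finset.sum_mul_sum]
    rw [Finset.sum_product, Finset.sum_comm]
    refine Finset.sum_congr rfl fun i _ ↦ ?_
    rw [Finset.sum_comm]
    refine Finset.sum_congr rfl fun j _ ↦ ?_
    simp only [frobPairing, dotProduct, Pi.pow_apply, Subalgebra.smul_def, MulMemClass.coe_mul,
      smul_eq_mul, Finset.mul_sum]
    exact Finset.sum_congr rfl fun m _ ↦ by ring
  have total : ∑ p ∈ Finset.range (k + 1) ×ˢ Finset.range (l + 1),
      (c p.1 * d p.2) • frobPairing K x y p.1 p.2 ∈ M := by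
    rw [← expand]
    simpa [Subalgebra.smul_def] using
      M.smul_mem ⟨_, sum_orbitMap_mul_orbitMap_mem hx hy hkl⟩ hM
  have hkl_mem : (↑k, ↑l) ∈ Finset.range (k + 1) ×ˢ Finset.range (l + 1) := by simp
  rw [← Finset.add_sum_erase _ _ hkl_mem] at total
  have lower : ∑ p ∈ (Finset.range (k + 1) ×ˢ Finset.range (l + 1)).erase (↑k, ↑l),
      (c p.1 * d p.2) • frobPairing K x y p.1 p.2 ∈ M := by
    refine sum_mem fun p hp ↦ M.smul_mem _ (hlt p (lt_of_le_of_ne ?_ (Finset.ne_of_mem_erase hp)))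
    have hp' := Finset.mem_of_mem_erase hp
    rw [Finset.mem_product, Finset.mem_range_succ_iff, Finset.mem_range_succ_iff] at hp'
    exact hp'
  simpa only [hck, hdl, one_mul, one_smul] using (M.add_mem_iff_left lower).1 total

theorem pow_card_pow_mem_of_lt {B : Subalgebra K S} {M : Submodule B S} {z : Fin n → S}
    (hB : ∀ j, orbitProd K z j ∈ B) (k : Fin n) (hM : ∀ e < q ^ (k : ℕ), z k ^ e ∈ M) :
    z k ^ q ^ (k : ℕ) ∈ M := by
  obtain ⟨c, hck, hc⟩ := exists_orbitMap_eq_sum k.castSucc fun j _ ↦ hB j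
  have top : orbitProd K z k =
      ∑ i ∈ Finset.range k, c i • z k ^ q ^ i + z k ^ q ^ (k : ℕ) := by
    rw [Fin.val_castSucc] at hck
    simp [orbitProd, hc, Finset.sum_range_succ, hck, Subalgebra.smul_def]
  have lower : ∑ i ∈ Finset.range k, c i • z k ^ q ^ i ∈ M :=
    sum_mem fun i hi ↦ M.smul_mem _
      (hM _ (Nat.pow_lt_pow_right Fintype.one_lt_card (Finset.mem_range.1 hi)))
  have one_mem : (1 : S) ∈ M := by
    simpa using hM 0 (pow_pos Fintype.card_pos _)
  refine (M.add_mem_iff_right lower).1 ?_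
  rw [← top]
  simpa [Subalgebra.smul_def] using M.smul_mem ⟨_, hB k⟩ one_mem

end OrbitProducts

section BoxMonomials

variable {R S J : Type*} [CommSemiring R] [CommSemiring S] [Algebra R S] [Fintype J]

/-- The monomial `∏ j, w j ^ c j` with exponents bounded by `c j < N j`. -/
def boxMonomial (w : J → S) (N : J → ℕ) (c : ∀ j, Fin (N j)) : S :=
  ∏ j, w j ^ (c j : ℕ)

variable (R) in
/-- The span of the monomials in `w` of weighted degree less than `d`. -/
def monomialsLT (w : J → S) (wt : J → ℕ) (d : ℕ) : Submodule R S :=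
  Submodule.span R ((fun a : J → ℕ ↦ ∏ j, w j ^ a j) '' {a | ∑ j, a j * wt j < d})

theorem pow_mem_monomialsLT {w : J → S} {wt : J → ℕ} {d e : ℕ} {j : J} (he : e * wt j < d) :
    w j ^ e ∈ monomialsLT R w wt d := by
  classical
  refine Submodule.subset_span ⟨Pi.single j e, ?_, ?_⟩
  · simpa [Pi.single_apply, ite_mul] using he
  · simp [Pi.single_apply, pow_ite]

theorem one_mem_monomialsLT {w : J → S} {wt : J → ℕ} {d : ℕ} (hd : 0 < d) :
    1 ∈ monomialsLT R w wt d :=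
  Submodule.subset_span ⟨0, by simpa using hd, by simp⟩

theorem prod_pow_mem_span_boxMonomial {w : J → S} {N wt : J → ℕ}
    (h : ∀ j, w j ^ N j ∈ monomialsLT R w wt (N j * wt j)) (a : J → ℕ) :
    ∏ j, w j ^ a j ∈ Submodule.span R (Set.range (boxMonomial w N)) := by
  classical
  induction hd : ∑ j, a j * wt j using Nat.strong_induction_on generalizing a with
  | _ d ih =>
  by_cases hbox : ∀ j, a j < N j
  · exact Submodule.subset_span ⟨fun j ↦ ⟨a j, hbox j⟩, rfl⟩
  obtain ⟨j, hj⟩ := not_forall.1 hbox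
  have hle : Pi.single j (N j) ≤ a := fun i ↦ by
    rcases eq_or_ne i j with rfl | hij
    · simpa using hj
    · simp [hij]
  obtain ⟨b, rfl⟩ : ∃ b : J → ℕ, a = b + Pi.single j (N j) :=
    ⟨_, (tsub_add_cancel_of_le hle).symm⟩
  have split : ∏ i, w i ^ (b + Pi.single j (N j) : J → ℕ) i = (∏ i, w i ^ b i) * w j ^ N j := by
    simp only [Pi.add_apply, pow_add, Finset.prod_mul_distrib]
    simp [Pi.single_apply, pow_ite]
  have weight : ∑ i, (b + Pi.single j (N j) : J → ℕ) i * wt i =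
      ∑ i, b i * wt i + N j * wt j := by
    simp [add_mul, Finset.sum_add_distrib, Pi.single_apply, ite_mul]
  have reduce : monomialsLT R w wt (N j * wt j) ≤
      (Submodule.span R (Set.range (boxMonomial w N))).comap
        (LinearMap.mulLeft R (∏ i, w i ^ b i)) := by
    rw [monomialsLT, Submodule.span_le]
    rintro _ ⟨c, hc, rfl⟩
    rw [Set.mem_ofPred_eq] at hc
    have := ih (∑ i, (b + c) i * wt i)
      (by simp only [Pi.add_apply, add_mul, Finset.sum_add_distrib]; omega) (b + c) rfl
    simpa [pow_add, Finset.prod_mul_distrib] using this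
  rw [split]
  exact reduce (h j)

theorem adjoin_le_span_boxMonomial {w : J → S} {N wt : J → ℕ}
    (h : ∀ j, w j ^ N j ∈ monomialsLT R w wt (N j * wt j)) :
    Subalgebra.toSubmodule (Algebra.adjoin R (Set.range w)) ≤
      Submodule.span R (Set.range (boxMonomial w N)) := by
  intro s hs
  rw [Subalgebra.mem_toSubmodule, Algebra.adjoin_range_eq_range_aeval] at hs
  obtain ⟨p, rfl⟩ := hs
  rw [AlgHom.toRingHom_eq_coe, RingHom.coe_coe, aeval_def, eval₂_eq']
  refine sum_mem fun a _ ↦ ?_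
  rw [← Algebra.smul_def]
  exact Submodule.smul_mem _ _ (prod_pow_mem_span_boxMonomial h a)

end BoxMonomials

section Dedekind

variable {R S G J ι : Type*} [CommRing R] [CommRing S] [IsDomain S] [Algebra R S]
  {φ : G → S →ₐ[R] S} {w : J → S} {m : ι → S}

theorem linearIndependent_algHom_apply
    (hspan : Subalgebra.toSubmodule (Algebra.adjoin R (Set.range w)) ≤
      Submodule.span R (Set.range m))
    (hφ : Function.Injective fun g j ↦ φ g (w j)) :
    LinearIndependent S fun g i ↦ φ g (m i) := by
  let ψ : G → Algebra.adjoin R (Set.range w) →* S := fun g ↦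
    ((φ g).comp (Algebra.adjoin R (Set.range w)).val : _ →* S)
  have hψ : Function.Injective ψ := fun g g' h ↦ hφ <| funext fun j ↦
    DFunLike.congr_fun h ⟨w j, Algebra.subset_adjoin (Set.mem_range_self j)⟩
  have dedekind := (linearIndependent_monoidHom _ S).comp ψ hψ
  rw [linearIndependent_iff] at dedekind ⊢
  intro v hv
  have vanish : Submodule.span R (Set.range m) ≤
      LinearMap.ker (v.sum fun g a ↦ a • (φ g).toLinearMap : S →ₗ[R] S) := by
    rw [Submodule.span_le]
    rintro _ ⟨i, rfl⟩
    simpa [Finsupp.linearCombination_apply, Finsupp.sum] using congrFun hv i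
  refine dedekind v (funext fun s ↦ ?_)
  simpa [Finsupp.linearCombination_apply, Finsupp.sum, ψ] using vanish (hspan s.2)

theorem linearIndependent_apply_algHom [Finite G] [Finite ι]
    (hspan : Subalgebra.toSubmodule (Algebra.adjoin R (Set.range w)) ≤
      Submodule.span R (Set.range m))
    (hφ : Function.Injective fun g j ↦ φ g (w j)) (hcard : Nat.card G = Nat.card ι) :
    LinearIndependent S fun i g ↦ φ g (m i) := by
  classical
  have := Fintype.ofFinite G
  obtain ⟨e⟩ := Finite.card_eq.1 hcard
  let M : Matrix G G S := .of fun g h ↦ φ g (m (e h))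
  have hM : M.det ≠ 0 := by
    intro h0
    obtain ⟨v, hv, hvM⟩ := Matrix.exists_vecMul_eq_zero_iff.2 h0
    have rows := linearIndependent_algHom_apply hspan hφ
    rw [Fintype.linearIndependent_iff] at rows
    refine hv (funext (rows v (funext fun i ↦ ?_)))
    simpa [M, vecMul, dotProduct] using congrFun hvM (e.symm i)
  have cols := Matrix.linearIndependent_cols_of_det_ne_zero hM
  exact (linearIndependent_equiv (f := fun i g ↦ φ g (m i)) e).1 cols

theorem linearIndependent_of_card_algHom_eq [Finite G] [Finite ι] [FaithfulSMul R S]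
    (hspan : Subalgebra.toSubmodule (Algebra.adjoin R (Set.range w)) ≤
      Submodule.span R (Set.range m))
    (hφ : Function.Injective fun g j ↦ φ g (w j)) (hcard : Nat.card G = Nat.card ι) :
    LinearIndependent R m := by
  have hRS : Function.Injective fun r : R ↦ r • (1 : S) := by
    simpa only [← Algebra.algebraMap_eq_smul_one] using FaithfulSMul.algebraMap_injective R S
  exact ((linearIndependent_apply_algHom hspan hφ hcard).restrict_scalars hRS).of_comp
    (LinearMap.pi fun g ↦ (φ g).toLinearMap)

theorem mem_range_algebraMap_of_fixed [Finite G] [Finite ι]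
    (hspan : Subalgebra.toSubmodule (Algebra.adjoin R (Set.range w)) ≤
      Submodule.span R (Set.range m))
    (hφ : Function.Injective fun g j ↦ φ g (w j)) (hcard : Nat.card G = Nat.card ι)
    {i₀ : ι} (hi₀ : m i₀ = 1) {s : S} (hs : s ∈ Algebra.adjoin R (Set.range w))
    (hfix : ∀ g, φ g s = s) : s ∈ Set.range (algebraMap R S) := by
  classical
  have := Fintype.ofFinite ι
  obtain ⟨c, hc⟩ := (Submodule.mem_span_range_iff_exists_fun R).1 (hspan hs)
  have cols := linearIndependent_apply_algHom hspan hφ hcard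
  rw [Fintype.linearIndependent_iff] at cols
  have key := cols (fun i ↦ algebraMap R S (c i) - if i = i₀ then s else 0) <| funext fun g ↦ by
      have expand : ∑ i, c i • φ g (m i) = s := by
        simpa [hfix g] using congrArg (φ g) hc
      simp [sub_mul, Finset.sum_sub_distrib, hi₀, ← Algebra.smul_def, expand]
  exact ⟨c i₀, by simpa [sub_eq_zero] using key i₀⟩

end Dedekind

section Localization

variable {K S G : Type*} [Field K] [Fintype K] [CommRing S] [Algebra K S] {n}
  {x y z : Fin n → S}

local notation "q" => Fintype.card K

theorem adjoin_le_span_boxMonomial_of_orbitProd_mem {B : Subalgebra K S}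
    (hB : ∀ j, orbitProd K z j ∈ B) :
    Subalgebra.toSubmodule (Algebra.adjoin B (Set.range z)) ≤
      Submodule.span B (Set.range (boxMonomial z fun j ↦ q ^ (j : ℕ))) :=
  adjoin_le_span_boxMonomial (wt := 1) fun j ↦
    pow_card_pow_mem_of_lt hB j fun _ he ↦ pow_mem_monomialsLT (by simpa using he)

theorem isIntegral_of_orbitProd_mem {B : Subalgebra K S} (hB : ∀ j, orbitProd K z j ∈ B)
    (k : Fin n) : IsIntegral B (z k) := by
  have hspan := adjoin_le_span_boxMonomial_of_orbitProd_mem hB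
  refine IsIntegral.of_mem_of_fg _ ?_ _ (Algebra.subset_adjoin (Set.mem_range_self k))
  rw [le_antisymm hspan (Submodule.span_le.2 ?_)]
  · exact Submodule.fg_span (Set.finite_range _)
  · rintro _ ⟨c, rfl⟩
    exact Subalgebra.prod_mem _ fun j _ ↦
      pow_mem (Algebra.subset_adjoin (Set.mem_range_self j)) _

/- `∑ i, E (x i) * y i ∈ L` for the additive polynomial `E = orbitMap K x k`, and `E (x i) = 0` for
`i < k`. So `orbitProd K x k * y k` is expressed through the `y i` with `i > k`. -/
theorem mem_of_frobPairing_mem {L : Subalgebra K S} (hx : ∀ i, x i ∈ L)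
    (hf : ∀ j, orbitProd K x j ∈ L) (hu : ∀ k < n, frobPairing K x y k 0 ∈ L)
    (hdiv : ∀ j s, orbitProd K x j * s ∈ L → s ∈ L) (k : Fin n) : y k ∈ L := by
  induction k using WellFoundedGT.induction with
  | ind k ih =>
  obtain ⟨c, -, hc⟩ := exists_orbitMap_eq_sum k.castSucc fun j _ ↦ hf j
  have expand : ∑ i, orbitMap K x k.castSucc (x i) * y i =
      ∑ m ∈ Finset.range (k + 1), c m * frobPairing K x y m 0 := by
    simp only [hc, Finset.sum_mul, Fin.val_castSucc]
    rw [Finset.sum_comm]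
    simp [frobPairing, dotProduct, Finset.mul_sum, mul_assoc]
  have total : ∑ i, orbitMap K x k.castSucc (x i) * y i ∈ L := by
    rw [expand]
    exact sum_mem fun m hm ↦ mul_mem (c m).2 (hu m (by simp at hm; omega))
  rw [← Finset.add_sum_erase _ _ (Finset.mem_univ k)] at total
  refine hdiv k _ ((add_mem_cancel_right (sum_mem fun i hi ↦ ?_)).1 total)
  rcases lt_or_gt_of_ne (Finset.ne_of_mem_erase hi) with hik | hki
  · rw [orbitMap_apply_eq_zero x _ i (Fin.castSucc_lt_castSucc_iff.2 hik), zero_mul]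
    exact zero_mem L
  · rw [hc]
    exact mul_mem (sum_mem fun m _ ↦ mul_mem (c m).2 (pow_mem (hx i) _)) (ih i hki)

theorem exists_closure_orbitProd_mul_mem_adjoin {C : Subalgebra K S}
    (hgen : Algebra.adjoin K (Set.range x ∪ Set.range y) = ⊤) (hf : ∀ j, orbitProd K x j ∈ C)
    (hu : ∀ k < n, frobPairing K x y k 0 ∈ C) (s : S) :
    ∃ d ∈ Submonoid.closure (Set.range (orbitProd K x)),
      d * s ∈ Algebra.adjoin C (Set.range x) := by
  set M := Submonoid.closure (Set.range (orbitProd K x))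
  set A := Algebra.adjoin C (Set.range x)
  have hCA : ∀ c ∈ C, c ∈ A := fun c hc ↦ A.algebraMap_mem ⟨c, hc⟩
  have hMA : M ≤ A.toSubmonoid := by
    rw [Submonoid.closure_le]
    rintro _ ⟨j, rfl⟩
    exact hCA _ (hf j)
  let L := (A.saturation M hMA).restrictScalars K
  have hAL : ∀ a ∈ A, a ∈ L := fun a ha ↦ Subalgebra.le_saturation (H := hMA) ha
  have hxL : ∀ i, x i ∈ L := fun i ↦ hAL _ (Algebra.subset_adjoin (Set.mem_range_self i))
  have hyL : ∀ i, y i ∈ L :=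
    mem_of_frobPairing_mem hxL (fun j ↦ hAL _ (hCA _ (hf j))) (fun k hk ↦ hAL _ (hCA _ (hu k hk)))
      fun j s hs ↦ Subalgebra.mem_saturation_of_mul_mem_left (H := hMA) hs
        (Submonoid.subset_closure (Set.mem_range_self j))
  have hL : Algebra.adjoin K (Set.range x ∪ Set.range y) ≤ L := by
    rw [Algebra.adjoin_le_iff]
    rintro _ (⟨i, rfl⟩ | ⟨i, rfl⟩)
    exacts [hxL i, hyL i]
  exact hL (hgen ▸ Algebra.mem_top)

theorem exists_closure_orbitProd_mul_mem_of_fixed [IsDomain S] [Finite G] {C : Subalgebra K S}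
    (hgen : Algebra.adjoin K (Set.range x ∪ Set.range y) = ⊤) (hf : ∀ j, orbitProd K x j ∈ C)
    (hu : ∀ k < n, frobPairing K x y k 0 ∈ C) {φ : G → S →ₐ[K] S}
    (hφ : Function.Injective fun g j ↦ φ g (x j)) (hcard : Nat.card G = ∏ j : Fin n, q ^ (j : ℕ))
    (hC : ∀ g, ∀ c ∈ C, φ g c = c) {r : S} (hr : ∀ g, φ g r = r) :
    ∃ d ∈ Submonoid.closure (Set.range (orbitProd K x)), d * r ∈ C := by
  obtain ⟨d, hd, hdr⟩ := exists_closure_orbitProd_mul_mem_adjoin hgen hf hu r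
  have hdC : d ∈ C := by
    refine (Submonoid.closure_le (S := C.toSubmonoid)).2 ?_ hd
    rintro _ ⟨j, rfl⟩
    exact hf j
  let φC : G → S →ₐ[C] S := fun g ↦ { φ g with commutes' := fun c ↦ hC g c c.2 }
  obtain ⟨c, hc⟩ := mem_range_algebraMap_of_fixed (φ := φC)
    (adjoin_le_span_boxMonomial_of_orbitProd_mem hf) hφ (by simpa using hcard)
    (i₀ := fun j ↦ ⟨0, pow_pos Fintype.card_pos _⟩) (by simp [boxMonomial]) hdr
    fun g ↦ (map_mul (φ g) d r).trans (by rw [hC g d hdC, hr g])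
  exact ⟨d, hd, hc ▸ c.2⟩

end Localization

section PairingGenerators

variable {n}

variable (n) in
/-- The integers `j` with `|j| ≤ n - 2`, which label the generators of the invariant ring other than
the orbit products. -/
abbrev PairingIndex : Type := Finset.Ioo (1 - n : ℤ) (n - 1)

/-- The generator `∑ m, x m ^ q ^ j * y m` for `0 ≤ j`, and `∑ m, x m * y m ^ q ^ (-j)` for `j ≤ 0`.
-/
def pairingGen (K : Type*) [Fintype K] {S : Type*} [CommSemiring S] (x y : Fin n → S)
    (j : PairingIndex n) : S :=
  frobPairing K x y (j : ℤ).toNat (-j : ℤ).toNat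

/-- The total degree of `pairingGen`. -/
def pairingWeight (q : ℕ) (j : PairingIndex n) : ℕ :=
  q ^ (j : ℤ).toNat + q ^ (-j : ℤ).toNat

/-- The strict bound on the exponent of `pairingGen` in reduced monomials. -/
def pairingBound (q : ℕ) (j : PairingIndex n) : ℕ :=
  q ^ ((n - (j : ℤ).natAbs) / 2)

variable (n) in
/-- The exponents `(k, l)` with `k - l = j` and `k + l = n` or `k + l = n - 1`. The power
`frobPairing k l` of `pairingGen j` is the leading term of a relation. -/
def leadingExponents (j : ℤ) : ℕ × ℕ :=
  (((n + j) / 2).toNat, ((n - j) / 2).toNat)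

theorem prod_pairingIndex {M : Type*} [CommMonoid M] (f : ℤ → M) :
    ∏ j : PairingIndex n, f j =
      (∏ i ∈ Finset.range (n - 1), f i) * ∏ i ∈ Finset.Icc 1 (n - 2), f (-i : ℤ) := by
  rw [Finset.prod_coe_sort, ← Finset.prod_filter_mul_prod_filter_not _ fun j : ℤ ↦ 0 ≤ j]
  congr 1
  · refine Finset.prod_nbij' Int.toNat Nat.cast ?_ ?_ ?_ ?_ ?_ <;> intro j hj <;>
      simp only [Finset.mem_filter, Finset.mem_Ioo, Finset.mem_range] at hj ⊢ <;> grind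
  · refine Finset.prod_nbij' (fun j ↦ (-j).toNat) (fun i ↦ -i) ?_ ?_ ?_ ?_ ?_ <;> intro j hj <;>
      simp only [Finset.mem_filter, Finset.mem_Ioo, Finset.mem_Icc] at hj ⊢ <;> grind

theorem prod_leadingExponents {M : Type*} [CommMonoid M] (f : ℕ × ℕ → M) :
    ∏ j : PairingIndex n, f (leadingExponents n j) =
      (∏ k ∈ Finset.Icc 2 (n - 1), f (k - 1, n - k)) *
        ∏ k ∈ Finset.Icc 1 (n - 1), f (k, n - k) := by
  rw [Finset.prod_coe_sort _ fun j ↦ f (leadingExponents n j),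
    ← Finset.prod_filter_mul_prod_filter_not _ fun j : ℤ ↦ ¬ (2 : ℤ) ∣ n - j]
  congr 1
  · refine Finset.prod_nbij' (fun j ↦ ((n + j + 1) / 2).toNat) (fun k ↦ 2 * k - n - 1)
      ?_ ?_ ?_ ?_ ?_ <;> intro j hj <;>
      simp only [Finset.mem_filter, Finset.mem_Ioo, Finset.mem_Icc, leadingExponents] at hj ⊢ <;>
      grind
  · refine Finset.prod_nbij' (fun j ↦ ((n + j) / 2).toNat) (fun k ↦ 2 * k - n)
      ?_ ?_ ?_ ?_ ?_ <;> intro j hj <;>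
      simp only [Finset.mem_filter, Finset.mem_Ioo, Finset.mem_Icc, leadingExponents] at hj ⊢ <;>
      grind

theorem sum_sub_div_two (m : ℕ) : ∑ i ∈ Finset.range (m - 1), (m - i) / 2 +
    ∑ i ∈ Finset.Icc 1 (m - 2), (m - i) / 2 = ∑ i ∈ Finset.range m, i := by
  match m with
  | 0 | 1 => rfl
  | m + 2 =>
  have reflect₁ : ∑ i ∈ Finset.range (m + 1), (m + 2 - i) / 2 =
      ∑ i ∈ Finset.range (m + 1), (i + 2) / 2 := by
    rw [← Finset.sum_range_reflect]
    exact Finset.sum_congr rfl fun i hi ↦ by rw [Finset.mem_range] at hi; omega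
  have reflect₂ : ∑ i ∈ Finset.Icc 1 m, (m + 2 - i) / 2 = ∑ i ∈ Finset.range m, (i + 2) / 2 := by
    refine Finset.sum_nbij' (m - ·) (m - ·) ?_ ?_ ?_ ?_ ?_ <;> intro i hi <;>
      simp only [Finset.mem_Icc, Finset.mem_range] at hi ⊢ <;> omega
  calc _ = ∑ i ∈ Finset.range (m + 1), (i + 2) / 2 + ∑ i ∈ Finset.range m, (i + 2) / 2 :=
        congrArg₂ (· + ·) reflect₁ reflect₂
    _ = ∑ i ∈ Finset.range (m + 2), i := by
      clear reflect₁ reflect₂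
      induction m with
      | zero => rfl
      | succ m ih =>
        simp only [Finset.sum_range_succ] at ih ⊢
        omega

theorem prod_pairingBound (q : ℕ) :
    ∏ j : PairingIndex n, pairingBound q j = ∏ i : Fin n, q ^ (i : ℕ) := by
  have split := prod_pairingIndex (n := n) fun j ↦ q ^ ((n - j.natAbs) / 2)
  simp only [Int.natAbs_natCast, Int.natAbs_neg, Finset.prod_pow_eq_pow_sum, ← pow_add,
    sum_sub_div_two] at split
  rw [Fin.prod_univ_eq_prod_range (q ^ ·) n, Finset.prod_pow_eq_pow_sum]
  simpa only [pairingBound, Finset.prod_pow_eq_pow_sum] using split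

theorem pow_min_mul_pairingWeight (q : ℕ) {a b : ℕ} {j : PairingIndex n} (hj : (j : ℤ) = a - b) :
    q ^ min a b * pairingWeight q j = q ^ a + q ^ b := by
  rw [pairingWeight, mul_add, ← pow_add, ← pow_add]
  congr 2 <;> omega

theorem leadingExponents_sub (j : PairingIndex n) :
    (j : ℤ) = (leadingExponents n j).1 - (leadingExponents n j).2 := by
  obtain ⟨j, hj⟩ := j
  rw [Finset.mem_Ioo] at hj
  simp only [leadingExponents]
  omega

theorem pairingBound_eq (q : ℕ) (j : PairingIndex n) :
    pairingBound q j = q ^ min (leadingExponents n j).1 (leadingExponents n j).2 := by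
  obtain ⟨j, hj⟩ := j
  rw [Finset.mem_Ioo] at hj
  simp only [pairingBound, leadingExponents]
  congr 1
  omega

variable {K S : Type*} [Field K] [Fintype K] [CommRing S] [Algebra K S] {B : Subalgebra K S}
  {x y : Fin n → S}

local notation "q" => Fintype.card K

theorem frobPairing_eq_pairingGen_pow (x y : Fin n → S) {a b : ℕ} {j : PairingIndex n}
    (hj : (j : ℤ) = a - b) : frobPairing K x y a b = pairingGen K x y j ^ q ^ min a b := by
  rw [pairingGen, frobPairing_pow]
  congr 1 <;> omega

theorem frobPairing_mem_monomialsLT (hx : ∀ j, orbitProd K x j ∈ B)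
    (hy : ∀ j, orbitProd K (y ∘ Fin.rev) j ∈ B) {a b d : ℕ} (ha : a < n) (hb : b < n)
    (hd : q ^ a + q ^ b < d) :
    frobPairing K x y a b ∈ monomialsLT B (pairingGen K x y) (pairingWeight q) d := by
  have inner : ∀ a b : ℕ, q ^ a + q ^ b < d → a + 1 < b + n → b + 1 < a + n →
      frobPairing K x y a b ∈ monomialsLT B (pairingGen K x y) (pairingWeight q) d := by
    intro a b hd hab hba
    let j : PairingIndex n := ⟨a - b, Finset.mem_Ioo.2 (by omega)⟩
    rw [frobPairing_eq_pairingGen_pow x y (j := j) rfl]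
    exact pow_mem_monomialsLT (by rwa [pow_min_mul_pairingWeight q rfl])
  by_cases hab : a + 1 < b + n ∧ b + 1 < a + n
  · exact inner a b hd hab.1 hab.2
  refine frobPairing_mem_of_lt (one_mem_monomialsLT (by omega)) hx hy
    (k := ⟨a, by omega⟩) (l := ⟨b, by omega⟩) (by simp only; omega) fun p hp ↦ ?_
  have h₁ : q ^ p.1 ≤ q ^ a := Nat.pow_le_pow_right Fintype.card_pos hp.le.1
  have h₂ : q ^ p.2 ≤ q ^ b := Nat.pow_le_pow_right Fintype.card_pos hp.le.2
  rw [Prod.lt_iff] at hp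
  exact inner p.1 p.2 (by omega) (by simp only at hp; omega) (by simp only at hp; omega)

theorem pairingGen_pow_mem_monomialsLT (hx : ∀ j, orbitProd K x j ∈ B)
    (hy : ∀ j, orbitProd K (y ∘ Fin.rev) j ∈ B) (j : PairingIndex n) :
    pairingGen K x y j ^ pairingBound q j ∈ monomialsLT B (pairingGen K x y) (pairingWeight q)
      (pairingBound q j * pairingWeight q j) := by
  have hj := leadingExponents_sub j
  rw [pairingBound_eq, pow_min_mul_pairingWeight q hj, ← frobPairing_eq_pairingGen_pow x y hj]
  have hpos : 0 < q := Fintype.card_pos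
  have hone : 1 < q := Fintype.one_lt_card
  have hk : (leadingExponents n j).1 < n ∧ (leadingExponents n j).2 < n ∧
      n ≤ (leadingExponents n j).1 + (leadingExponents n j).2 + 1 := by
    have := Finset.mem_Ioo.1 j.2
    simp only [leadingExponents]
    omega
  generalize leadingExponents n j = e at hk ⊢
  refine frobPairing_mem_of_lt (one_mem_monomialsLT (by positivity)) hx hy
    (k := ⟨e.1, by omega⟩) (l := ⟨e.2, by omega⟩) hk.2.2 fun p hp ↦
      frobPairing_mem_monomialsLT hx hy (hp.le.1.trans_lt hk.1) (hp.le.2.trans_lt hk.2.1) ?_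
  rcases Prod.lt_iff.1 hp with ⟨h₁, h₂⟩ | ⟨h₁, h₂⟩
  · exact add_lt_add_of_lt_of_le (Nat.pow_lt_pow_right hone h₁) (Nat.pow_le_pow_right hpos h₂)
  · exact add_lt_add_of_le_of_lt (Nat.pow_le_pow_right hpos h₁) (Nat.pow_lt_pow_right hone h₂)

theorem frobPairing_mem_adjoin_pairingGen (hx : ∀ j, orbitProd K x j ∈ B)
    (hy : ∀ j, orbitProd K (y ∘ Fin.rev) j ∈ B) {a b : ℕ} (ha : a < n) (hb : b < n) :
    frobPairing K x y a b ∈ Algebra.adjoin B (Set.range (pairingGen K x y)) := by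
  refine (Submodule.span_le (p := Subalgebra.toSubmodule (Algebra.adjoin B _))).2 ?_
    (frobPairing_mem_monomialsLT hx hy ha hb (Nat.lt_succ_self _))
  rintro _ ⟨c, -, rfl⟩
  exact Subalgebra.prod_mem _ fun j _ ↦
    pow_mem (Algebra.subset_adjoin (Set.mem_range_self j)) _

end PairingGenerators

section Unitriangular

variable {R : Type*} {n}

/-- Upper triangular matrices with all diagonal entries equal to `1`. -/
def IsUnitriangular [Zero R] [One R] (A : Matrix (Fin n) (Fin n) R) : Prop :=
  (∀ i, A i i = 1) ∧ ∀ i j, j < i → A i j = 0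

theorem isUnitriangular_one [Zero R] [One R] : IsUnitriangular (1 : Matrix (Fin n) (Fin n) R) :=
  ⟨one_apply_eq, fun _ _ h ↦ one_apply_ne' h.ne⟩

namespace IsUnitriangular

theorem transpose_submatrix_rev [Zero R] [One R] {A : Matrix (Fin n) (Fin n) R}
    (hA : IsUnitriangular A) : IsUnitriangular (A.submatrix Fin.rev Fin.rev)ᵀ :=
  ⟨fun i ↦ hA.1 i.rev, fun _ _ h ↦ hA.2 _ _ (Fin.rev_lt_rev.2 h)⟩

/-- A unitriangular matrix is determined by its freely chosen entries above the diagonal. -/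
def equivPi [Zero R] [One R] :
    {A : Matrix (Fin n) (Fin n) R // IsUnitriangular A} ≃ ∀ j : Fin n, Set.Iio j → R where
  toFun A j i := A.1 i j
  invFun t := ⟨fun i j ↦ if h : i < j then t j ⟨i, h⟩ else if i = j then 1 else 0,
    fun i ↦ by simp, fun i j h ↦ by simp [h.not_gt, h.ne']⟩
  left_inv A := by
    ext i j
    rcases lt_trichotomy i j with h | rfl | h
    · simp [h]
    · simp [A.2.1]
    · simp [h.not_gt, h.ne', A.2.2 i j h]
  right_inv t := by
    ext j i
    simp [Set.mem_Iio.1 i.2]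

variable [CommRing R] {A : Matrix (Fin n) (Fin n) R}

theorem det_eq_one (hA : IsUnitriangular A) : A.det = 1 := by
  rw [det_of_isUpperTriangular fun i j ↦ hA.2 i j]
  exact Finset.prod_eq_one fun i _ ↦ hA.1 i

theorem mul_nonsing_inv (hA : IsUnitriangular A) : A * A⁻¹ = 1 :=
  Matrix.mul_nonsing_inv A (hA.det_eq_one ▸ isUnit_one)

theorem inv (hA : IsUnitriangular A) : IsUnitriangular A⁻¹ := by
  have := invertibleOfIsUnitDet A (hA.det_eq_one ▸ isUnit_one)
  have upper : A⁻¹.BlockTriangular id :=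
    blockTriangular_inv_of_blockTriangular (fun i j ↦ hA.2 i j)
  refine ⟨fun i ↦ ?_, fun i j ↦ @upper i j⟩
  have diag := congrFun (congrFun hA.mul_nonsing_inv i) i
  rwa [mul_apply, one_apply_eq, Finset.sum_eq_single i, hA.1, one_mul] at diag
  · intro j _ hji
    rcases lt_or_gt_of_ne hji with h | h
    · rw [hA.2 i j h, zero_mul]
    · rw [@upper j i h, mul_zero]
  · simp

end IsUnitriangular

instance [Zero R] [One R] [Finite R] :
    Finite {A : Matrix (Fin n) (Fin n) R // IsUnitriangular A} :=
  .of_equiv _ IsUnitriangular.equivPi.symm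

theorem card_isUnitriangular [Zero R] [One R] [Fintype R] :
    Nat.card {A : Matrix (Fin n) (Fin n) R // IsUnitriangular A} =
      ∏ j : Fin n, Fintype.card R ^ (j : ℕ) := by
  simp [Nat.card_congr IsUnitriangular.equivPi]

end Unitriangular

section Substitutions

variable {K S : Type*} [Field K] [CommRing S] [Algebra K S] {n}

theorem sum_smul_sub_mem_span {A : Matrix (Fin n) (Fin n) K} (hA : IsUnitriangular A)
    (z : Fin n → S) (j : Fin n) :
    ∑ i, A i j • z i - z j ∈ Submodule.span K (z '' Set.Iio j) := by
  rw [← Finset.add_sum_erase _ _ (Finset.mem_univ j), hA.1, one_smul, add_sub_cancel_left]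
  refine sum_mem fun i hi ↦ ?_
  rcases lt_or_gt_of_ne (Finset.ne_of_mem_erase hi) with h | h
  · exact Submodule.smul_mem _ _ (Submodule.subset_span ⟨i, h, rfl⟩)
  · rw [hA.2 i j h, zero_smul]
    exact zero_mem _

theorem map_orbitProd_of_isUnitriangular [Fintype K] {A : Matrix (Fin n) (Fin n) K}
    (hA : IsUnitriangular A) {φ : S →ₐ[K] S} {z : Fin n → S}
    (hφ : ∀ j, φ (z j) = ∑ i, A i j • z i) (k : Fin n) :
    φ (orbitProd K z k) = orbitProd K z k :=
  map_orbitProd (fun j ↦ hφ j ▸ sum_smul_sub_mem_span hA z j) k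

theorem map_orbitProd_rev_of_isUnitriangular [Fintype K] {B : Matrix (Fin n) (Fin n) K}
    (hB : IsUnitriangular B) {φ : S →ₐ[K] S} {z : Fin n → S}
    (hφ : ∀ j, φ (z j) = ∑ i, B j i • z i) (k : Fin n) :
    φ (orbitProd K (z ∘ Fin.rev) k) = orbitProd K (z ∘ Fin.rev) k :=
  map_orbitProd_of_isUnitriangular hB.transpose_submatrix_rev
    (fun j ↦ (hφ j.rev).trans (Equiv.sum_comp Fin.revPerm fun i ↦ B j.rev i • z i).symm) k

theorem map_frobPairing_of_mul_eq_one [Fintype K] {A B : Matrix (Fin n) (Fin n) K}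
    (hAB : A * B = 1) {φ : S →ₐ[K] S} {x y : Fin n → S}
    (hx : ∀ j, φ (x j) = ∑ i, A i j • x i) (hy : ∀ j, φ (y j) = ∑ i, B j i • y i) (a b : ℕ) :
    φ (frobPairing K x y a b) = frobPairing K x y a b := by
  have frob (c : Fin n → K) (z : Fin n → S) (e : ℕ) :
      (∑ i, c i • z i) ^ Fintype.card K ^ e = ∑ i, c i • z i ^ Fintype.card K ^ e := by
    simp only [← frobeniusAlgHom_pow_apply, map_sum, map_smul]
  simp only [frobPairing, dotProduct, Pi.pow_apply, map_sum, map_mul, map_pow, hx, hy, frob,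
    Finset.sum_mul_sum]
  rw [Finset.sum_comm]
  refine Finset.sum_congr rfl fun i _ ↦ ?_
  rw [Finset.sum_comm]
  simp only [smul_mul_smul_comm, ← Finset.sum_smul, ← mul_apply, hAB, one_apply, ite_smul,
    one_smul, zero_smul, Finset.sum_ite_eq, Finset.mem_univ, if_true]

end Substitutions

section Coprime

theorem isRelPrime_of_mem_closure {M : Type*} [CommMonoid M] [DecompositionMonoid M] {s t : Set M}
    (h : ∀ a ∈ s, ∀ b ∈ t, IsRelPrime a b) {d e : M} (hd : d ∈ Submonoid.closure s)
    (he : e ∈ Submonoid.closure t) : IsRelPrime d e := by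
  induction hd using Submonoid.closure_induction with
  | one => exact isRelPrime_one_left
  | mul _ _ _ _ hd₁ hd₂ => exact hd₁.mul_left hd₂
  | mem a ha =>
    induction he using Submonoid.closure_induction with
    | one => exact isRelPrime_one_right
    | mul _ _ _ _ he₁ he₂ => exact he₁.mul_right he₂
    | mem b hb => exact h a ha b hb

theorem exists_mem_closure_coe_eq {R S ι : Type*} [CommSemiring R] [Semiring S] [Algebra R S]
    {B : Subalgebra R S} {h : ι → B} {d : S}
    (hd : d ∈ Submonoid.closure (Set.range fun i ↦ (h i : S))) :
    ∃ d' ∈ Submonoid.closure (Set.range h), (d' : S) = d := by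
  refine Submonoid.mem_map (f := B.val).1 ?_
  rwa [MonoidHom.map_mclosure, ← Set.range_comp]

theorem mem_span_of_isRelPrime_smul_mem {R M ι : Type*} [CommRing R] [IsDomain R]
    [DecompositionMonoid R] [AddCommGroup M] [Module R M] [Module.IsTorsionFree R M] [Finite ι]
    {m : ι → M} (hm : LinearIndependent R m) {d e : R} (hde : IsRelPrime d e) (hd₀ : d ≠ 0) {s : M}
    (hd : d • s ∈ Submodule.span R (Set.range m)) (he : e • s ∈ Submodule.span R (Set.range m)) :
    s ∈ Submodule.span R (Set.range m) := by
  have := Fintype.ofFinite ι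
  rw [Submodule.mem_span_range_iff_exists_fun] at hd he ⊢
  obtain ⟨c, hc⟩ := hd
  obtain ⟨c', hc'⟩ := he
  have cross : ∀ i, e * c i = d * c' i := by
    refine fun i ↦ Fintype.linearIndependent_iffₛ.1 hm (fun i ↦ e * c i) (fun i ↦ d * c' i) ?_ i
    simp only [mul_smul, ← Finset.smul_sum, hc, hc', smul_comm e d]
  choose b hb using fun i ↦ hde.dvd_of_dvd_mul_left ⟨c' i, cross i⟩
  refine ⟨b, smul_right_injective M hd₀ ?_⟩
  simp only [Finset.smul_sum, ← mul_smul, ← hb, hc]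

end Coprime

section AlgebraicIndependence

variable {K S σ : Type*} [Field K] [CommRing S] [Algebra K S] {v : σ → S}

theorem decompositionMonoid_adjoin (hv : AlgebraicIndependent K v) :
    DecompositionMonoid (Algebra.adjoin K (Set.range v)) :=
  MulEquiv.decompositionMonoid hv.aevalEquiv.symm

theorem isRelPrime_adjoin (hv : AlgebraicIndependent K v) {i j : σ} (hij : i ≠ j)
    {a b : Algebra.adjoin K (Set.range v)} (ha : a = v i) (hb : b = v j) : IsRelPrime a b := by
  have symm_apply {k} {c : Algebra.adjoin K (Set.range v)} (hc : c = v k) :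
      hv.aevalEquiv.symm c = X k :=
    hv.aevalEquiv.symm_apply_eq.2 (Subtype.ext (by simp [hc]))
  refine IsRelPrime.of_map hv.aevalEquiv.symm ?_
  rw [symm_apply ha, symm_apply hb, X_prime.irreducible.isRelPrime_iff_not_dvd, X_dvd_X]
  simpa using hij

/-- The monomial basis of the algebra generated by an algebraically independent family. -/
noncomputable def adjoinMonomialBasis (hv : AlgebraicIndependent K v) :
    Module.Basis (σ →₀ ℕ) K (Algebra.adjoin K (Set.range v)) :=
  (basisMonomials σ K).map hv.aevalEquiv.toLinearEquiv

theorem coe_adjoinMonomialBasis (hv : AlgebraicIndependent K v) (a : σ →₀ ℕ) :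
    (adjoinMonomialBasis hv a : S) = a.prod fun i e ↦ v i ^ e := by
  simp [adjoinMonomialBasis, aeval_monomial]

theorem linearIndependent_prod_mul {ι : Type*} {m : ι → S} (hv : AlgebraicIndependent K v)
    (hm : LinearIndependent (Algebra.adjoin K (Set.range v)) m) :
    LinearIndependent K fun p : (σ →₀ ℕ) × ι ↦ (p.1.prod fun i e ↦ v i ^ e) * m p.2 := by
  simpa [Subalgebra.smul_def, coe_adjoinMonomialBasis] using
    linearIndependent_smul (adjoinMonomialBasis hv).linearIndependent hm

theorem span_prod_mul {ι : Type*} (hv : AlgebraicIndependent K v) (m : ι → S) :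
    Submodule.span K (Set.range fun p : (σ →₀ ℕ) × ι ↦ (p.1.prod fun i e ↦ v i ^ e) * m p.2) =
      (Submodule.span (Algebra.adjoin K (Set.range v)) (Set.range m)).restrictScalars K := by
  rw [← Submodule.span_smul_of_span_eq_top (adjoinMonomialBasis hv).span_eq, ← Set.image2_smul,
    Set.image2_range]
  simp only [Subalgebra.smul_def, coe_adjoinMonomialBasis, smul_eq_mul]

end AlgebraicIndependence

section UnitriangularInvariants

variable {K : Type*} [Field K] {n : ℕ}

local notation "𝒫" => MvPolynomial (Fin n ⊕ Fin n) K

variable (K n) in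
/-- The coordinates `x_1, …, x_n` of `K[V ⊕ V*]`. -/
noncomputable def xVar (j : Fin n) : 𝒫 := X (Sum.inl j)

variable (K n) in
/-- The coordinates `y_1, …, y_n` of `K[V ⊕ V*]`. -/
noncomputable def yVar (j : Fin n) : 𝒫 := X (Sum.inr j)

theorem adjoin_xVar_union_yVar :
    Algebra.adjoin K (Set.range (xVar K n) ∪ Set.range (yVar K n)) = ⊤ := by
  rw [← MvPolynomial.adjoin_range_X, ← Set.Sum.elim_range]
  congr 2
  exact Sum.elim_comp_inl_inr X

/-- The substitution acting on the `x`-variables through the columns of `A` and on the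
`y`-variables through the rows of `B`; the action of `σ` on `K[V ⊕ V*]` has `A = σ` and
`B = σ⁻¹`. -/
noncomputable def linearSubst (A B : Matrix (Fin n) (Fin n) K) : 𝒫 →ₐ[K] 𝒫 :=
  aeval (Sum.elim (fun j ↦ ∑ i, C (A i j) * X (Sum.inl i))
    fun j ↦ ∑ i, C (B j i) * X (Sum.inr i))

theorem linearSubst_xVar (A B : Matrix (Fin n) (Fin n) K) (j : Fin n) :
    linearSubst A B (xVar K n j) = ∑ i, A i j • xVar K n i := by
  simp [linearSubst, xVar, smul_eq_C_mul]

theorem linearSubst_yVar (A B : Matrix (Fin n) (Fin n) K) (j : Fin n) :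
    linearSubst A B (yVar K n j) = ∑ i, B j i • yVar K n i := by
  simp [linearSubst, yVar, smul_eq_C_mul]

variable (K n) in
/-- The invariant ring `K[V ⊕ V*]^{U_n}`. -/
noncomputable def unitriangularInvariants : Subalgebra K 𝒫 :=
  ⨅ A : {A : Matrix (Fin n) (Fin n) K // IsUnitriangular A},
    AlgHom.equalizer (linearSubst A.1 A.1⁻¹) (AlgHom.id K 𝒫)

theorem mem_unitriangularInvariants {r : 𝒫} : r ∈ unitriangularInvariants K n ↔
    ∀ A : {A : Matrix (Fin n) (Fin n) K // IsUnitriangular A}, linearSubst A.1 A.1⁻¹ r = r := by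
  simp [unitriangularInvariants, Algebra.mem_iInf, AlgHom.mem_equalizer]

theorem linearIndependent_xVar : LinearIndependent K (xVar K n) :=
  (linearIndependent_X (Fin n ⊕ Fin n) K).comp _ Sum.inl_injective

theorem linearIndependent_yVar : LinearIndependent K (yVar K n) :=
  (linearIndependent_X (Fin n ⊕ Fin n) K).comp _ Sum.inr_injective

theorem eq_of_linearSubst_xVar_eq {A A' B B' : Matrix (Fin n) (Fin n) K}
    (h : ∀ j, linearSubst A B (xVar K n j) = linearSubst A' B' (xVar K n j)) : A = A' := by
  simp only [linearSubst_xVar] at h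
  ext i j
  exact Fintype.linearIndependent_iffₛ.1 linearIndependent_xVar _ _ (h j) i

theorem eq_of_linearSubst_yVar_eq {A A' B B' : Matrix (Fin n) (Fin n) K}
    (h : ∀ j, linearSubst A B (yVar K n j) = linearSubst A' B' (yVar K n j)) : B = B' := by
  simp only [linearSubst_yVar] at h
  ext j i
  exact Fintype.linearIndependent_iffₛ.1 linearIndependent_yVar _ _ (h j) i

variable [Fintype K]

theorem eq_of_linearSubst_one_frobPairing_eq {B B' : Matrix (Fin n) (Fin n) K}
    (h : linearSubst 1 B (frobPairing K (xVar K n) (yVar K n) 0 0) =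
      linearSubst 1 B' (frobPairing K (xVar K n) (yVar K n) 0 0)) : B = B' := by
  refine eq_of_linearSubst_yVar_eq (A := 1) (A' := 1) fun j ↦ ?_
  let evalX : 𝒫 →ₐ[K] 𝒫 := aeval (Sum.elim (Pi.single j 1) (yVar K n))
  have eval (B : Matrix (Fin n) (Fin n) K) :
      evalX (linearSubst 1 B (frobPairing K (xVar K n) (yVar K n) 0 0)) =
        linearSubst 1 B (yVar K n j) := by
    have hx i : evalX (xVar K n i) = Pi.single (M := fun _ ↦ 𝒫) j 1 i := by
      simp [evalX, xVar]
    have hy i : evalX (yVar K n i) = yVar K n i := by simp [evalX, yVar]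
    simp [frobPairing, dotProduct, linearSubst_xVar, linearSubst_yVar, one_apply, ite_smul, hx, hy,
      Pi.single_apply, ite_mul]
  simpa only [eval] using congrArg evalX h

variable (K n) in
/-- The orbit products of the `x`-variables, taken in increasing order, and of the `y`-variables,
taken in decreasing order. -/
noncomputable def orbitGens : Fin n ⊕ Fin n → 𝒫 :=
  Sum.elim (orbitProd K (xVar K n)) (orbitProd K (yVar K n ∘ Fin.rev))

variable (K n) in
/-- The polynomial subalgebra of `K[V ⊕ V*]^{U_n}` generated by the orbit products. -/
noncomputable abbrev orbitAlgebra : Subalgebra K 𝒫 := Algebra.adjoin K (Set.range (orbitGens K n))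

theorem orbitProd_xVar_mem (j : Fin n) : orbitProd K (xVar K n) j ∈ orbitAlgebra K n :=
  Algebra.subset_adjoin ⟨Sum.inl j, rfl⟩

theorem orbitProd_yVar_rev_mem (j : Fin n) :
    orbitProd K (yVar K n ∘ Fin.rev) j ∈ orbitAlgebra K n :=
  Algebra.subset_adjoin ⟨Sum.inr j, rfl⟩

theorem linearSubst_of_mem_orbitAlgebra {A B : Matrix (Fin n) (Fin n) K} (hA : IsUnitriangular A)
    (hB : IsUnitriangular B) {r : 𝒫} (hr : r ∈ orbitAlgebra K n) : linearSubst A B r = r := by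
  have : orbitAlgebra K n ≤ AlgHom.equalizer (linearSubst A B) (AlgHom.id K 𝒫) := by
    rw [Algebra.adjoin_le_iff]
    rintro _ ⟨i | i, rfl⟩
    · exact map_orbitProd_of_isUnitriangular hA (linearSubst_xVar A B) i
    · exact map_orbitProd_rev_of_isUnitriangular hB (linearSubst_yVar A B) i
  exact this hr

/-- The substitution by two unitriangular matrices, as a homomorphism of algebras over
`orbitAlgebra K n`. -/
noncomputable def orbitLinearSubst {A B : Matrix (Fin n) (Fin n) K} (hA : IsUnitriangular A)
    (hB : IsUnitriangular B) : 𝒫 →ₐ[orbitAlgebra K n] 𝒫 :=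
  { linearSubst A B with commutes' := fun b ↦ linearSubst_of_mem_orbitAlgebra hA hB b.2 }

theorem algebraicIndependent_orbitGens : AlgebraicIndependent K (orbitGens K n) := by
  have integral : (⊤ : Subalgebra K 𝒫) ≤
      (integralClosure (orbitAlgebra K n) 𝒫).restrictScalars K := by
    rw [← adjoin_xVar_union_yVar, Algebra.adjoin_le_iff]
    rintro _ (⟨i, rfl⟩ | ⟨i, rfl⟩)
    · exact isIntegral_of_orbitProd_mem orbitProd_xVar_mem i
    · have := isIntegral_of_orbitProd_mem (orbitProd_yVar_rev_mem (K := K)) i.rev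
      rwa [Function.comp_apply, Fin.rev_rev] at this
  have : Algebra.IsIntegral (orbitAlgebra K n) 𝒫 := ⟨fun s ↦ integral Algebra.mem_top⟩
  refine (Algebra.IsAlgebraic.isTranscendenceBasis_of_lift_le_trdeg_of_finite K
    (orbitGens K n) ?_).1
  rw [MvPolynomial.trdeg_of_isDomain]
  simp

variable (K n) in
/-- The algebra generated over `orbitAlgebra K n` by the Frobenius twists `pairingGen` of the
pairing; it turns out to be the whole invariant ring. -/
noncomputable abbrev pairingAlgebra : Subalgebra K 𝒫 :=
  (Algebra.adjoin (orbitAlgebra K n)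
    (Set.range (pairingGen K (xVar K n) (yVar K n)))).restrictScalars K

theorem orbitAlgebra_le_pairingAlgebra : orbitAlgebra K n ≤ pairingAlgebra K n :=
  fun r hr ↦ Subalgebra.algebraMap_mem
    (Algebra.adjoin (orbitAlgebra K n) (Set.range (pairingGen K (xVar K n) (yVar K n)))) ⟨r, hr⟩

theorem frobPairing_mem_pairingAlgebra {a b : ℕ} (ha : a < n) (hb : b < n) :
    frobPairing K (xVar K n) (yVar K n) a b ∈ pairingAlgebra K n :=
  frobPairing_mem_adjoin_pairingGen orbitProd_xVar_mem orbitProd_yVar_rev_mem ha hb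

theorem pairingAlgebra_le_unitriangularInvariants :
    pairingAlgebra K n ≤ unitriangularInvariants K n := by
  refine fun r hr ↦ mem_unitriangularInvariants.2 fun ⟨A, hA⟩ ↦ ?_
  have : Algebra.adjoin (orbitAlgebra K n) (Set.range (pairingGen K (xVar K n) (yVar K n))) ≤
      AlgHom.equalizer (orbitLinearSubst hA hA.inv) (AlgHom.id _ 𝒫) := by
    rw [Algebra.adjoin_le_iff]
    rintro _ ⟨j, rfl⟩
    exact map_frobPairing_of_mul_eq_one hA.mul_nonsing_inv (linearSubst_xVar A A⁻¹)
      (linearSubst_yVar A A⁻¹) _ _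
  exact this hr

variable (K n) in
/-- The monomials in the generating pairings that form a basis of the invariant ring over
`orbitAlgebra K n`. -/
noncomputable abbrev pairingMonomial :
    (∀ j : PairingIndex n, Fin (pairingBound (Fintype.card K) j)) → 𝒫 :=
  boxMonomial (pairingGen K (xVar K n) (yVar K n)) (pairingBound (Fintype.card K))

theorem toSubmodule_pairingAlgebra : Subalgebra.toSubmodule (pairingAlgebra K n) =
    (Submodule.span (orbitAlgebra K n) (Set.range (pairingMonomial K n))).restrictScalars K := by
  refine le_antisymm (fun r hr ↦ adjoin_le_span_boxMonomial
    (pairingGen_pow_mem_monomialsLT orbitProd_xVar_mem orbitProd_yVar_rev_mem) hr) ?_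
  change Submodule.span _ _ ≤ Subalgebra.toSubmodule (Algebra.adjoin (orbitAlgebra K n) _)
  rw [Submodule.span_le]
  rintro _ ⟨c, rfl⟩
  exact Subalgebra.prod_mem _ fun j _ ↦ pow_mem (Algebra.subset_adjoin (Set.mem_range_self j)) _

theorem linearIndependent_pairingMonomial (hn : 2 ≤ n) :
    LinearIndependent (orbitAlgebra K n) (pairingMonomial K n) := by
  refine linearIndependent_of_card_algHom_eq
    (φ := fun A : {A : Matrix (Fin n) (Fin n) K // IsUnitriangular A} ↦
      orbitLinearSubst isUnitriangular_one A.2)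
    (adjoin_le_span_boxMonomial
      (pairingGen_pow_mem_monomialsLT orbitProd_xVar_mem orbitProd_yVar_rev_mem))
    (fun A A' h ↦ Subtype.ext ?_) ?_
  · exact eq_of_linearSubst_one_frobPairing_eq (congrFun h ⟨0, by simp; omega⟩)
  · rw [card_isUnitriangular, ← prod_pairingBound]
    simp

theorem exists_closure_orbitProd_xVar_mul_mem {r : 𝒫} (hr : r ∈ unitriangularInvariants K n) :
    ∃ d ∈ Submonoid.closure (Set.range (orbitProd K (xVar K n))), d * r ∈ pairingAlgebra K n := by
  refine exists_closure_orbitProd_mul_mem_of_fixed adjoin_xVar_union_yVar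
    (fun j ↦ orbitAlgebra_le_pairingAlgebra (orbitProd_xVar_mem j))
    (fun k hk ↦ frobPairing_mem_pairingAlgebra hk (by omega))
    (fun A A' h ↦ Subtype.ext (eq_of_linearSubst_xVar_eq (congrFun h))) card_isUnitriangular
    (fun A c hc ↦ ?_) (mem_unitriangularInvariants.1 hr)
  exact mem_unitriangularInvariants.1 (pairingAlgebra_le_unitriangularInvariants hc) A

theorem exists_closure_orbitProd_yVar_mul_mem {r : 𝒫} (hr : r ∈ unitriangularInvariants K n) :
    ∃ e ∈ Submonoid.closure (Set.range (orbitProd K (yVar K n ∘ Fin.rev))),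
      e * r ∈ pairingAlgebra K n := by
  have hgen : Algebra.adjoin K (Set.range (yVar K n ∘ Fin.rev) ∪
      Set.range (xVar K n ∘ Fin.rev)) = ⊤ := by
    rw [Fin.rev_surjective.range_comp, Fin.rev_surjective.range_comp, Set.union_comm,
      adjoin_xVar_union_yVar]
  refine exists_closure_orbitProd_mul_mem_of_fixed hgen
    (fun j ↦ orbitAlgebra_le_pairingAlgebra (orbitProd_yVar_rev_mem j)) (fun k hk ↦ ?_)
    (fun A A' h ↦ Subtype.ext ?_) card_isUnitriangular (fun A c hc ↦ ?_)
    (mem_unitriangularInvariants.1 hr)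
  · rw [frobPairing_comp_rev, frobPairing_swap]
    exact frobPairing_mem_pairingAlgebra (by omega) hk
  · have inv_eq : A.1⁻¹ = A'.1⁻¹ := eq_of_linearSubst_yVar_eq fun j ↦ by
      simpa using congrFun h j.rev
    exact inv_inj inv_eq (A.2.det_eq_one ▸ isUnit_one)
  · exact mem_unitriangularInvariants.1 (pairingAlgebra_le_unitriangularInvariants hc) A

theorem unitriangularInvariants_eq_pairingAlgebra (hn : 2 ≤ n) :
    unitriangularInvariants K n = pairingAlgebra K n := by
  refine le_antisymm (fun r hr ↦ ?_) pairingAlgebra_le_unitriangularInvariants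
  have hv := algebraicIndependent_orbitGens (K := K) (n := n)
  have := decompositionMonoid_adjoin hv
  let f (i : Fin n) : orbitAlgebra K n := ⟨_, orbitProd_xVar_mem i⟩
  let g (i : Fin n) : orbitAlgebra K n := ⟨_, orbitProd_yVar_rev_mem i⟩
  obtain ⟨d₀, hd₀, hdr⟩ := exists_closure_orbitProd_xVar_mul_mem hr
  obtain ⟨e₀, he₀, her⟩ := exists_closure_orbitProd_yVar_mul_mem hr
  obtain ⟨d, hd, rfl⟩ := exists_mem_closure_coe_eq (h := f) hd₀
  obtain ⟨e, he, rfl⟩ := exists_mem_closure_coe_eq (h := g) he₀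
  have coprime : IsRelPrime d e := by
    refine isRelPrime_of_mem_closure ?_ hd he
    rintro _ ⟨i, rfl⟩ _ ⟨j, rfl⟩
    exact isRelPrime_adjoin hv (i := Sum.inl i) (j := Sum.inr j) Sum.inl_ne_inr rfl rfl
  have d_ne_zero : d ≠ 0 := by
    have : Submonoid.closure (Set.range f) ≤ nonZeroDivisors (orbitAlgebra K n) := by
      rw [Submonoid.closure_le]
      rintro _ ⟨i, rfl⟩
      exact mem_nonZeroDivisors_of_ne_zero fun h ↦ hv.ne_zero (Sum.inl i) (congrArg Subtype.val h)
    exact nonZeroDivisors.ne_zero (this hd)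
  have mem {s : 𝒫} : s ∈ pairingAlgebra K n ↔
      s ∈ Submodule.span (orbitAlgebra K n) (Set.range (pairingMonomial K n)) := by
    rw [← Subalgebra.mem_toSubmodule, toSubmodule_pairingAlgebra, Submodule.restrictScalars_mem]
  exact mem.2 (mem_span_of_isRelPrime_smul_mem (linearIndependent_pairingMonomial hn) coprime
    d_ne_zero (mem.1 hdr) (mem.1 her))

end UnitriangularInvariants

section WeightedHomogeneous

variable {K σ M : Type*} [Field K] [AddCommMonoid M] {w : σ → M}

theorem isWeightedHomogeneous_iff_forall_apply {R σ ω : Type*} [CommSemiring R] [Finite ω]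
    {w : σ → ω →₀ ℕ} {p : MvPolynomial σ R} {m : ω →₀ ℕ} : IsWeightedHomogeneous w p m ↔
      ∀ k, IsWeightedHomogeneous (fun i ↦ w i k) p (m k) := by
  have weight_apply (d : σ →₀ ℕ) (k : ω) :
      Finsupp.weight w d k = Finsupp.weight (fun i ↦ w i k) d := by
    simp [Finsupp.weight_apply, Finsupp.sum, Finsupp.finsetSum_apply]
  simp only [IsWeightedHomogeneous, Finsupp.ext_iff, weight_apply]
  grind

theorem isWeightedHomogeneous_orbitMap [Fintype K] {n : ℕ} {z : Fin n → MvPolynomial σ K} {m : M}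
    (hz : ∀ i, IsWeightedHomogeneous w (z i) m) (k : Fin (n + 1)) {p : MvPolynomial σ K}
    (hp : IsWeightedHomogeneous w p m) :
    IsWeightedHomogeneous w (orbitMap K z k p) (Fintype.card K ^ (k : ℕ) • m) := by
  induction k using Fin.induction generalizing p with
  | zero => simpa [orbitMap_zero] using hp
  | succ k ih =>
    rw [orbitMap_succ, Fin.val_succ, pow_succ', mul_smul]
    have correction := ((ih (hz k)).pow (Fintype.card K - 1)).mul (ih hp)
    rw [← succ_nsmul, Nat.sub_add_cancel Fintype.card_pos] at correction
    exact ((ih hp).pow _).sub correction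

theorem isWeightedHomogeneous_orbitProd [Fintype K] {n : ℕ} {z : Fin n → MvPolynomial σ K} {m : M}
    (hz : ∀ i, IsWeightedHomogeneous w (z i) m) (k : Fin n) :
    IsWeightedHomogeneous w (orbitProd K z k) (Fintype.card K ^ (k : ℕ) • m) :=
  isWeightedHomogeneous_orbitMap hz k.castSucc (hz k)

theorem isWeightedHomogeneous_frobPairing [Fintype K] {n : ℕ} {x y : Fin n → MvPolynomial σ K}
    {m m' : M} (hx : ∀ i, IsWeightedHomogeneous w (x i) m)
    (hy : ∀ i, IsWeightedHomogeneous w (y i) m') (a b : ℕ) :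
    IsWeightedHomogeneous w (frobPairing K x y a b)
      (Fintype.card K ^ a • m + Fintype.card K ^ b • m') :=
  IsWeightedHomogeneous.sum _ _ _ fun i _ ↦ ((hx i).pow _).mul ((hy i).pow _)

variable {ι : Type*} {e : ι → MvPolynomial σ K} {deg : ι → M}

theorem span_range_inf_weightedHomogeneousSubmodule
    (he : ∀ i, IsWeightedHomogeneous w (e i) (deg i)) (m : M) :
    Submodule.span K (Set.range e) ⊓ weightedHomogeneousSubmodule K w m =
      Submodule.span K (Set.range fun i : {i // deg i = m} ↦ e i) := by
  classical
  refine le_antisymm ?_ (le_inf (Submodule.span_mono ?_) ?_)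
  · rintro p ⟨hp, hpm⟩
    rw [← weightedHomogeneousComponent_eq_self hpm]
    clear hpm
    induction hp using Submodule.span_induction with
    | zero => simp
    | add _ _ _ _ h h' => rw [map_add]; exact add_mem h h'
    | smul c _ _ h => rw [map_smul]; exact Submodule.smul_mem _ c h
    | mem p hp =>
      obtain ⟨i, rfl⟩ := hp
      rw [weightedHomogeneousComponent_of_mem (he i)]
      split_ifs with h
      · exact Submodule.subset_span ⟨⟨i, h.symm⟩, rfl⟩
      · exact zero_mem _
  · rintro _ ⟨i, rfl⟩
    exact Set.mem_range_self _
  · rw [Submodule.span_le]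
    rintro _ ⟨⟨i, rfl⟩, rfl⟩
    exact he i

theorem finrank_span_range_inf_weightedHomogeneousSubmodule (hli : LinearIndependent K e)
    (he : ∀ i, IsWeightedHomogeneous w (e i) (deg i)) (m : M) :
    Module.finrank K ↥(Submodule.span K (Set.range e) ⊓ weightedHomogeneousSubmodule K w m) =
      Nat.card {i // deg i = m} := by
  rw [span_range_inf_weightedHomogeneousSubmodule he]
  exact Module.finrank_eq_nat_card_basis
    (Module.Basis.span (hli.comp _ Subtype.val_injective))

end WeightedHomogeneous

section DegreeSeries

variable {ι κ ω : Type*}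

/-- The generating function of a family of degrees: the coefficient of `T ^ m` is the number of
indices of degree `m`. Degrees attained infinitely often get the coefficient `0`. -/
noncomputable def degreeSeries (deg : ι → ω →₀ ℕ) : MvPowerSeries ω ℤ :=
  fun m ↦ (Nat.card {i // deg i = m} : ℤ)

theorem coeff_degreeSeries (deg : ι → ω →₀ ℕ) (m : ω →₀ ℕ) :
    MvPowerSeries.coeff m (degreeSeries deg) = Nat.card {i // deg i = m} := rfl

theorem degreeSeries_comp_equiv (e : κ ≃ ι) (deg : ι → ω →₀ ℕ) :
    degreeSeries (deg ∘ e) = degreeSeries deg :=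
  funext fun _ ↦ congrArg Nat.cast (Nat.card_congr (e.subtypeEquiv fun _ ↦ Iff.rfl))

open Classical in
theorem coeff_degreeSeries_of_injective {deg : ι → ω →₀ ℕ} (hdeg : Function.Injective deg)
    (m : ω →₀ ℕ) : MvPowerSeries.coeff m (degreeSeries deg) = if ∃ i, deg i = m then 1 else 0 := by
  have : Subsingleton {i // deg i = m} := ⟨fun a b ↦ Subtype.ext (hdeg (a.2.trans b.2.symm))⟩
  rw [coeff_degreeSeries]
  split_ifs with h
  · obtain ⟨i, hi⟩ := h
    exact_mod_cast Nat.card_of_subsingleton (⟨i, hi⟩ : {i // deg i = m})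
  · have : IsEmpty {i // deg i = m} := ⟨fun i ↦ h ⟨i, i.2⟩⟩
    exact_mod_cast Nat.card_of_isEmpty

theorem degreeSeries_pi [Fintype ι] {κ : ι → Type*} {deg : ∀ j, κ j → ω →₀ ℕ}
    (hdeg : ∀ j, Function.Injective (deg j)) :
    degreeSeries (fun a : ∀ j, κ j ↦ ∑ j, deg j (a j)) = ∏ j, degreeSeries (deg j) := by
  classical
  ext m
  simp_rw [coeff_degreeSeries, MvPowerSeries.coeff_prod, coeff_degreeSeries_of_injective (hdeg _),
    Finset.prod_ite_zero, Finset.prod_const_one, Finset.sum_boole]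
  rw [← Nat.card_eq_finsetCard]
  congr 1
  refine Nat.card_eq_of_bijective
    (fun a ↦ ⟨Finsupp.equivFunOnFinite.symm fun j ↦ deg j (a.1 j), ?_⟩) ⟨fun a b hab ↦ ?_, ?_⟩
  · simpa using a.2
  · ext j
    exact hdeg j (DFunLike.congr_fun (congrArg Subtype.val hab) j)
  · rintro ⟨l, hl⟩
    simp only [Finset.mem_filter, Finset.mem_finsuppAntidiag, Finset.mem_univ, true_imp_iff] at hl
    choose a ha using hl.2
    refine ⟨⟨a, by simp only [ha, hl.1.1]⟩, ?_⟩
    ext1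
    ext1 j
    exact ha j

theorem smul_left_injective_of_ne_zero {δ : ω →₀ ℕ} (hδ : δ ≠ 0) :
    Function.Injective fun c : ℕ ↦ c • δ := by
  intro a b hab
  obtain ⟨i, hi⟩ := Finsupp.ne_iff.1 hδ
  exact Nat.eq_of_mul_eq_mul_right (Nat.pos_of_ne_zero hi) (DFunLike.congr_fun hab i)

theorem one_sub_monomial_mul_degreeSeries_nat {δ : ω →₀ ℕ} (hδ : δ ≠ 0) :
    (1 - MvPowerSeries.monomial δ 1) * degreeSeries (fun c : ℕ ↦ c • δ) = 1 := by
  classical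
  ext m
  simp_rw [sub_mul, one_mul, map_sub, MvPowerSeries.coeff_monomial_mul, one_mul,
    MvPowerSeries.coeff_one, coeff_degreeSeries_of_injective (smul_left_injective_of_ne_zero hδ),
    ← Nat.or_exists_add_one (p := fun c ↦ c • δ = m), zero_smul, succ_nsmul]
  by_cases hm : δ ≤ m
  · have : m ≠ 0 := by rintro rfl; exact hδ (le_zero_iff.1 hm)
    simp [this, this.symm, hm, eq_tsub_iff_add_eq_of_le]
  · have : ∀ c : ℕ, c • δ + δ ≠ m := fun c h ↦ hm (h ▸ le_add_self)
    simp [hm, this, eq_comm]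

theorem degreeSeries_of_fintype [Fintype ι] (deg : ι → ω →₀ ℕ) :
    degreeSeries deg = ∑ i, MvPowerSeries.monomial (deg i) 1 := by
  classical
  ext m
  simp_rw [coeff_degreeSeries, map_sum, MvPowerSeries.coeff_monomial, Finset.sum_boole,
    Nat.card_eq_fintype_card, Fintype.card_subtype, eq_comm]

theorem one_sub_monomial_mul_degreeSeries_fin (δ : ω →₀ ℕ) (N : ℕ) :
    (1 - MvPowerSeries.monomial δ 1) * degreeSeries (fun c : Fin N ↦ (c : ℕ) • δ) =
      1 - MvPowerSeries.monomial (N • δ) 1 := by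
  have power (c : ℕ) : MvPowerSeries.monomial (c • δ) (1 : ℤ) = MvPowerSeries.monomial δ 1 ^ c := by
    rw [MvPowerSeries.monomial_pow, one_pow]
  simp_rw [degreeSeries_of_fintype, power]
  rw [Fin.sum_univ_eq_sum_range, mul_neg_geom_sum]

theorem degreeSeries_monomials_mul {σ : Type*} [Fintype σ] [Fintype ι] {δ : σ → ω →₀ ℕ}
    {ε : ι → ω →₀ ℕ} (hδ : ∀ i, δ i ≠ 0) (hε : ∀ j, ε j ≠ 0) (N : ι → ℕ) :
    degreeSeries (fun p : (σ →₀ ℕ) × (∀ j, Fin (N j)) ↦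
        ∑ i, p.1 i • δ i + ∑ j, (p.2 j : ℕ) • ε j) *
      ((∏ i, (1 - MvPowerSeries.monomial (δ i) 1)) * ∏ j, (1 - MvPowerSeries.monomial (ε j) 1)) =
    ∏ j, (1 - MvPowerSeries.monomial (N j • ε j) 1) := by
  let κ : σ ⊕ ι → Type := Sum.elim (fun _ ↦ ℕ) fun j ↦ Fin (N j)
  let deg : ∀ k, κ k → ω →₀ ℕ :=
    Sum.rec (fun i (c : ℕ) ↦ c • δ i) fun j (c : Fin (N j)) ↦ (c : ℕ) • ε j
  have hdeg : ∀ k, Function.Injective (deg k) := by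
    rintro (i | j)
    · exact smul_left_injective_of_ne_zero (hδ i)
    · exact (smul_left_injective_of_ne_zero (hε j)).comp Fin.val_injective
  let e : (∀ k, κ k) ≃ (σ →₀ ℕ) × (∀ j, Fin (N j)) :=
    (Equiv.sumPiEquivProdPi κ).trans (Finsupp.equivFunOnFinite.symm.prodCongr (Equiv.refl _))
  rw [← degreeSeries_comp_equiv e]
  calc _ = (∏ k, degreeSeries (deg k)) * _ := by
        rw [← degreeSeries_pi hdeg]
        simp only [Fintype.sum_sum_type]
        rfl
    _ = (∏ i, (1 - MvPowerSeries.monomial (δ i) 1) * degreeSeries fun c : ℕ ↦ c • δ i) *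
        ∏ j, (1 - MvPowerSeries.monomial (ε j) 1) *
          degreeSeries fun c : Fin (N j) ↦ (c : ℕ) • ε j := by
        rw [Fintype.prod_sum_type, Finset.prod_mul_distrib, Finset.prod_mul_distrib,
          mul_comm, mul_mul_mul_comm]
        rfl
    _ = _ := by
        simp only [one_sub_monomial_mul_degreeSeries_nat (hδ _),
          one_sub_monomial_mul_degreeSeries_fin, Finset.prod_const_one, one_mul]

end DegreeSeries

section HilbertSeries

/-- The bidegree `(d, e)`, as the exponent of the monomial `s ^ d * t ^ e`. -/
noncomputable def bidegree (d e : ℕ) : Fin 2 →₀ ℕ := Finsupp.single 0 d + Finsupp.single 1 e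

theorem smul_bidegree (c d e : ℕ) : c • bidegree d e = bidegree (c * d) (c * e) := by
  simp [bidegree]

theorem bidegree_ne_zero {d e : ℕ} (h : d ≠ 0 ∨ e ≠ 0) : bidegree d e ≠ 0 := by
  intro h0
  have h₀ := DFunLike.congr_fun h0 0
  have h₁ := DFunLike.congr_fun h0 1
  simp [bidegree] at h₀ h₁
  omega

theorem monomial_bidegree (d e : ℕ) : MvPowerSeries.monomial (bidegree d e) (1 : ℤ) =
    MvPowerSeries.X 0 ^ d * MvPowerSeries.X 1 ^ e := by
  rw [bidegree, MvPowerSeries.X_pow_eq, MvPowerSeries.X_pow_eq, MvPowerSeries.monomial_mul_monomial,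
    one_mul]

/-- The weights `(1, 0)` of the `x`-variables and `(0, 1)` of the `y`-variables. -/
noncomputable def biweight (n : ℕ) : Fin n ⊕ Fin n → Fin 2 →₀ ℕ :=
  Sum.elim (fun _ ↦ bidegree 1 0) fun _ ↦ bidegree 0 1

theorem isWeightedHomogeneous_biweight_iff {R : Type*} [CommSemiring R] {n : ℕ}
    {r : MvPolynomial (Fin n ⊕ Fin n) R} {m : Fin 2 →₀ ℕ} :
    IsWeightedHomogeneous (biweight n) r m ↔
      IsWeightedHomogeneous (Sum.elim (fun _ ↦ 1) fun _ ↦ 0) r (m 0) ∧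
        IsWeightedHomogeneous (Sum.elim (fun _ ↦ 0) fun _ ↦ 1) r (m 1) := by
  rw [isWeightedHomogeneous_iff_forall_apply, Fin.forall_fin_two]
  congr! 2 <;> ext (i | i) <;> simp [biweight, bidegree]

section Degrees

variable {K : Type*} [Field K] {n : ℕ}

theorem isWeightedHomogeneous_xVar (i : Fin n) :
    IsWeightedHomogeneous (biweight n) (xVar K n i) (bidegree 1 0) :=
  isWeightedHomogeneous_X K _ _

theorem isWeightedHomogeneous_yVar (i : Fin n) :
    IsWeightedHomogeneous (biweight n) (yVar K n i) (bidegree 0 1) :=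
  isWeightedHomogeneous_X K _ _

/-- The bidegree of `orbitGens`. -/
noncomputable def orbitDegree (q n : ℕ) : Fin n ⊕ Fin n → Fin 2 →₀ ℕ :=
  Sum.elim (fun i ↦ bidegree (q ^ (i : ℕ)) 0) fun i ↦ bidegree 0 (q ^ (i : ℕ))

/-- The bidegree of `pairingGen`. -/
noncomputable def pairingDegree (q : ℕ) (j : PairingIndex n) : Fin 2 →₀ ℕ :=
  bidegree (q ^ (j : ℤ).toNat) (q ^ (-j : ℤ).toNat)

variable [Fintype K]

theorem isWeightedHomogeneous_orbitGens (i : Fin n ⊕ Fin n) :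
    IsWeightedHomogeneous (biweight n) (orbitGens K n i) (orbitDegree (Fintype.card K) n i) := by
  rcases i with i | i
  · have := isWeightedHomogeneous_orbitProd (isWeightedHomogeneous_xVar (K := K)) i
    rwa [smul_bidegree, mul_one, mul_zero] at this
  · have := isWeightedHomogeneous_orbitProd
      (fun i : Fin n ↦ isWeightedHomogeneous_yVar (K := K) i.rev) i
    rwa [smul_bidegree, mul_one, mul_zero] at this

theorem isWeightedHomogeneous_pairingGen (j : PairingIndex n) :
    IsWeightedHomogeneous (biweight n) (pairingGen K (xVar K n) (yVar K n) j)
      (pairingDegree (Fintype.card K) j) := by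
  simpa [pairingGen, smul_bidegree, pairingDegree, bidegree] using
    isWeightedHomogeneous_frobPairing isWeightedHomogeneous_xVar isWeightedHomogeneous_yVar
      (j : ℤ).toNat (-j : ℤ).toNat

/-- The bidegrees of the products of a monomial in `orbitGens` and a `pairingMonomial`. -/
noncomputable def basisDegree (q n : ℕ)
    (p : (Fin n ⊕ Fin n →₀ ℕ) × (∀ j : PairingIndex n, Fin (pairingBound q j))) : Fin 2 →₀ ℕ :=
  ∑ i, p.1 i • orbitDegree q n i + ∑ j, (p.2 j : ℕ) • pairingDegree q j

theorem isWeightedHomogeneous_prod_orbitGens_mul_pairingMonomial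
    (p : (Fin n ⊕ Fin n →₀ ℕ) × (∀ j : PairingIndex n, Fin (pairingBound (Fintype.card K) j))) :
    IsWeightedHomogeneous (biweight n)
      ((p.1.prod fun i e ↦ orbitGens K n i ^ e) * pairingMonomial K n p.2)
      (basisDegree (Fintype.card K) n p) := by
  rw [Finsupp.prod_fintype _ _ fun _ ↦ pow_zero _]
  exact (IsWeightedHomogeneous.prod _ _ _ fun i _ ↦ (isWeightedHomogeneous_orbitGens i).pow _).mul
    (IsWeightedHomogeneous.prod _ _ _ fun j _ ↦ (isWeightedHomogeneous_pairingGen j).pow _)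

theorem finrank_unitriangularInvariants_inf (hn : 2 ≤ n) (m : Fin 2 →₀ ℕ) :
    Module.finrank K ↥(Subalgebra.toSubmodule (unitriangularInvariants K n) ⊓
        weightedHomogeneousSubmodule K (biweight n) m) =
      Nat.card {p // basisDegree (Fintype.card K) n p = m} := by
  have hli := linearIndependent_prod_mul algebraicIndependent_orbitGens
    (linearIndependent_pairingMonomial (K := K) hn)
  have span_eq := span_prod_mul algebraicIndependent_orbitGens (pairingMonomial K n)
  rw [unitriangularInvariants_eq_pairingAlgebra hn, toSubmodule_pairingAlgebra, ← span_eq,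
    finrank_span_range_inf_weightedHomogeneousSubmodule hli
      isWeightedHomogeneous_prod_orbitGens_mul_pairingMonomial m]

end Degrees

theorem forall_gact_eq_iff {K : Type} [Field K] {n : ℕ} {r : MvPolynomial (Fin n ⊕ Fin n) K} :
    (∀ σ : GL (Fin n) K, ((∀ i, σ.1 i i = 1) ∧ ∀ i j, j < i → σ.1 i j = 0) → gact K n σ r = r) ↔
      r ∈ unitriangularInvariants K n := by
  have gact_eq (σ : GL (Fin n) K) : gact K n σ = linearSubst σ.1 σ.1⁻¹ := by
    rw [← coe_units_inv]
    rfl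
  rw [mem_unitriangularInvariants]
  refine ⟨fun h A ↦ ?_, fun h σ hσ ↦ (gact_eq σ).symm ▸ h ⟨σ.1, hσ⟩⟩
  let σ := GeneralLinearGroup.mkOfDetNeZero A.1 (A.2.det_eq_one ▸ one_ne_zero)
  exact gact_eq σ ▸ h σ A.2

theorem invBihom_eq {K : Type} [Field K] {n : ℕ} (m : Fin 2 →₀ ℕ) :
    invBihom K n (m 0) (m 1) = Subalgebra.toSubmodule (unitriangularInvariants K n) ⊓
      weightedHomogeneousSubmodule K (biweight n) m := by
  ext r
  simp only [invBihom, Submodule.mem_inf, mem_weightedHomogeneousSubmodule,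
    isWeightedHomogeneous_biweight_iff, Submodule.mem_iInf, LinearMap.mem_ker, LinearMap.sub_apply,
    sub_eq_zero, Subalgebra.mem_toSubmodule, ← forall_gact_eq_iff, and_comm]
  rfl

variable {F} {n}

theorem hilbertSeries_eq_degreeSeries (hn : 2 ≤ n) :
    hilbertSeries F n = degreeSeries (basisDegree (Fintype.card F) n) := by
  ext m
  change (Module.finrank F (invBihom F n (m 0) (m 1)) : ℤ) = _
  rw [coeff_degreeSeries, invBihom_eq, finrank_unitriangularInvariants_inf hn]

theorem hilbertSeries_mul (hn : 2 ≤ n) : hilbertSeries F n *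
    ((∏ i, (1 - MvPowerSeries.monomial (orbitDegree (Fintype.card F) n i) 1)) *
      ∏ j : PairingIndex n, (1 - MvPowerSeries.monomial (pairingDegree (Fintype.card F) j) 1)) =
    ∏ j : PairingIndex n, (1 - MvPowerSeries.monomial
      (pairingBound (Fintype.card F) j • pairingDegree (Fintype.card F) j) 1) := by
  have pow_ne_zero (k : ℕ) : Fintype.card F ^ k ≠ 0 := pow_ne_zero k Fintype.card_ne_zero
  rw [hilbertSeries_eq_degreeSeries hn]
  refine degreeSeries_monomials_mul ?_ (fun j ↦ bidegree_ne_zero (.inl (pow_ne_zero _))) _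
  rintro (i | i)
  exacts [bidegree_ne_zero (.inl (pow_ne_zero _)), bidegree_ne_zero (.inr (pow_ne_zero _))]

theorem prod_one_sub_monomial_orbitDegree (q n : ℕ) :
    ∏ i, (1 - MvPowerSeries.monomial (orbitDegree q n i) (1 : ℤ)) =
      ∏ i ∈ Finset.range n,
        ((1 - MvPowerSeries.X 0 ^ q ^ i) * (1 - MvPowerSeries.X 1 ^ q ^ i)) := by
  rw [Fintype.prod_sum_type, Finset.prod_mul_distrib, ← Fin.prod_univ_eq_prod_range,
    ← Fin.prod_univ_eq_prod_range]
  simp [orbitDegree, monomial_bidegree]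

theorem prod_one_sub_monomial_pairingDegree (q n : ℕ) :
    ∏ j : PairingIndex n, (1 - MvPowerSeries.monomial (pairingDegree q j) (1 : ℤ)) =
      (∏ i ∈ Finset.range (n - 1), (1 - MvPowerSeries.X 0 ^ q ^ i * MvPowerSeries.X 1)) *
        ∏ i ∈ Finset.Icc 1 (n - 2), (1 - MvPowerSeries.X 0 * MvPowerSeries.X 1 ^ q ^ i) := by
  simp only [pairingDegree, monomial_bidegree]
  rw [prod_pairingIndex fun j ↦ 1 - (MvPowerSeries.X 0 : MvPowerSeries (Fin 2) ℤ) ^ q ^ j.toNat *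
    MvPowerSeries.X 1 ^ q ^ (-j).toNat]
  simp

theorem pairingBound_smul_pairingDegree (q : ℕ) (j : PairingIndex n) :
    pairingBound q j • pairingDegree q j =
      bidegree (q ^ (leadingExponents n j).1) (q ^ (leadingExponents n j).2) := by
  have hj := leadingExponents_sub j
  rw [pairingBound_eq, pairingDegree, smul_bidegree, ← pow_add, ← pow_add]
  congr 2 <;> omega

theorem prod_one_sub_monomial_pairingBound_smul (q n : ℕ) :
    ∏ j : PairingIndex n,
        (1 - MvPowerSeries.monomial (pairingBound q j • pairingDegree q j) (1 : ℤ)) =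
      (∏ k ∈ Finset.Icc 2 (n - 1),
        (1 - MvPowerSeries.X 0 ^ q ^ (k - 1) * MvPowerSeries.X 1 ^ q ^ (n - k))) *
        ∏ k ∈ Finset.Icc 1 (n - 1),
          (1 - MvPowerSeries.X 0 ^ q ^ k * MvPowerSeries.X 1 ^ q ^ (n - k)) := by
  simp only [pairingBound_smul_pairingDegree, monomial_bidegree]
  exact prod_leadingExponents fun p ↦ 1 - MvPowerSeries.X 0 ^ q ^ p.1 * MvPowerSeries.X 1 ^ q ^ p.2

end HilbertSeries

/-- The bigraded Hilbert series of `F_q[V ⊕ V*]^{U_n}` (for `n ≥ 2`), in the form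
`H(s,t) · ∏_{i=0}^{n-1} (1-s^{q^i})(1-t^{q^i}) · ∏_{i=0}^{n-2} (1-s^{q^i}t) · ∏_{i=1}^{n-2} (1-st^{q^i})
 = ∏_{k=2}^{n-1} (1-s^{q^{k-1}}t^{q^{n-k}}) · ∏_{k=1}^{n-1} (1-s^{q^k}t^{q^{n-k}})`. -/
theorem hilbertSeries_Un (hn : 2 ≤ n) :
    hilbertSeries F n *
      (∏ i ∈ Finset.range n,
        ((1 - (MvPowerSeries.X 0 : MvPowerSeries (Fin 2) ℤ) ^ (Fintype.card F) ^ i) *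
         (1 - (MvPowerSeries.X 1 : MvPowerSeries (Fin 2) ℤ) ^ (Fintype.card F) ^ i))) *
      (∏ i ∈ Finset.range (n - 1),
        (1 - (MvPowerSeries.X 0 : MvPowerSeries (Fin 2) ℤ) ^ (Fintype.card F) ^ i *
          MvPowerSeries.X 1)) *
      (∏ i ∈ Finset.Icc 1 (n - 2),
        (1 - MvPowerSeries.X 0 *
          (MvPowerSeries.X 1 : MvPowerSeries (Fin 2) ℤ) ^ (Fintype.card F) ^ i))
    = (∏ k ∈ Finset.Icc 2 (n - 1),
        (1 - (MvPowerSeries.X 0 : MvPowerSeries (Fin 2) ℤ) ^ (Fintype.card F) ^ (k - 1) *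
          MvPowerSeries.X 1 ^ (Fintype.card F) ^ (n - k))) *
      (∏ k ∈ Finset.Icc 1 (n - 1),
        (1 - (MvPowerSeries.X 0 : MvPowerSeries (Fin 2) ℤ) ^ (Fintype.card F) ^ k *
          MvPowerSeries.X 1 ^ (Fintype.card F) ^ (n - k))) := by
  rw [← prod_one_sub_monomial_pairingBound_smul, ← hilbertSeries_mul hn,
    prod_one_sub_monomial_orbitDegree, prod_one_sub_monomial_pairingDegree]
  simp only [mul_assoc]
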